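/- arXiv:math/0110223 — 3 statements merged into one kernel-verified Lean document; each statement's English description precedes it below -/
import Mathlib

section
/- Let p be an odd prime, H a Hopf algebra over k of index p such that H* is not unimodular (i.e., the distinguished group-like element g of H satisfies g ≠ 1), and ω ∈ k a primitive p-th root of unity. Then p divides dim H, and for each j ∈ Z_p, the sum over (a,i) ∈ Z_2 × Z_p of dim H^ω_{a,i,j} equals (dim H)/p. -/
open scoped TensorProduct

/-- A group-like element of a coalgebra: a nonzero element `a` with `Δ a = a ⊗ a`. -/
def IsGroupLike (k : Type*) {H : Type*} [CommSemiring k] [AddCommMonoid H] [Module k H]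
    [Coalgebra k H] (a : H) : Prop :=
  a ≠ 0 ∧ Coalgebra.comul (R := k) a = a ⊗ₜ[k] a

/-- The convolution product on the dual of a coalgebra. -/
noncomputable def conv {k H : Type*} [CommSemiring k] [AddCommMonoid H] [Module k H]
    [Coalgebra k H] (f g : Module.Dual k H) : Module.Dual k H :=
  LinearMap.mul' k k ∘ₗ TensorProduct.map f g ∘ₗ Coalgebra.comul

/-- `l ∈ H*` is a right integral of `H*`: `l * β = β(1) • l` for the convolution product. -/
def IsRightIntegralDual (k : Type*) {H : Type*} [CommSemiring k] [Semiring H]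
    [HopfAlgebra k H] (l : Module.Dual k H) : Prop :=
  ∀ f : Module.Dual k H, conv l f = f 1 • l

/-- `Λ ∈ H` is a left integral of `H`: `a * Λ = ε(a) • Λ` for all `a`. -/
def IsLeftIntegral (k : Type*) {H : Type*} [CommSemiring k] [Semiring H]
    [HopfAlgebra k H] (L : H) : Prop :=
  ∀ a : H, a * L = Coalgebra.counit (R := k) a • L

/-- `Λ ∈ H` is a right integral of `H`: `Λ * a = ε(a) • Λ` for all `a`. -/
def IsRightIntegral (k : Type*) {H : Type*} [CommSemiring k] [Semiring H]
    [HopfAlgebra k H] (L : H) : Prop :=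
  ∀ a : H, L * a = Coalgebra.counit (R := k) a • L

/-- `g` is the distinguished group-like element of `H`: it is group-like and
`β * λ = β(g) • λ` for some nonzero right integral `λ` of `H*`. -/
def IsDistinguishedGroupLike (k : Type*) {H : Type*} [CommSemiring k] [Semiring H]
    [HopfAlgebra k H] (g : H) : Prop :=
  IsGroupLike k g ∧ ∃ l : Module.Dual k H, l ≠ 0 ∧ IsRightIntegralDual k l ∧
    ∀ f : Module.Dual k H, conv f l = f g • l

/-- `α` is the distinguished group-like element of `H*`: an algebra map `H → k` with
`Λ * a = α(a) • Λ` for some nonzero left integral `Λ` of `H`. -/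
def IsDistinguishedGroupLikeDual (k : Type*) {H : Type*} [CommSemiring k] [Semiring H]
    [HopfAlgebra k H] (α : H →ₐ[k] k) : Prop :=
  ∃ L : H, L ≠ 0 ∧ IsLeftIntegral k L ∧ ∀ a : H, L * a = α a • L

/-- `IsHopfIndex k g n` : `n` is the index of the Hopf algebra `H` with distinguished
group-like element `g`, i.e. the smallest positive integer `n` with `S ^ (4 n) = id` and
`g ^ n = 1`, where `S` is the antipode. -/
def IsHopfIndex (k : Type*) {H : Type*} [CommSemiring k] [Semiring H] [HopfAlgebra k H]
    (g : H) (n : ℕ) : Prop :=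
  0 < n ∧ (HopfAlgebra.antipode (R := k) (A := H) : Module.End k H) ^ (4 * n) = 1 ∧ g ^ n = 1 ∧
    ∀ m : ℕ, 0 < m → (HopfAlgebra.antipode (R := k) (A := H) : Module.End k H) ^ (4 * m) = 1 →
      g ^ m = 1 → n ≤ m

/-- The simultaneous eigenspace `H^ω_{a,i,j} = {u ∈ H | S² u = (-1)^a ω^i • u, u * g = ω^j • u}`
for `(a,i,j) ∈ ℤ/2 × ℤ/n × ℤ/n`. -/
noncomputable def hopfEigenspace {k H : Type*} [CommRing k] [Ring H] [HopfAlgebra k H]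
    (g : H) (ω : k) {n : ℕ} (t : ZMod 2 × ZMod n × ZMod n) : Submodule k H :=
  Module.End.eigenspace ((HopfAlgebra.antipode (R := k) (A := H) : Module.End k H) ^ 2)
      ((-1 : k) ^ t.1.val * ω ^ t.2.1.val) ⊓
    Module.End.eigenspace (LinearMap.mulRight k g : Module.End k H) (ω ^ t.2.2.val)

/-- Convolution powers of an element of the dual; the zeroth power is the counit,
the unit of the convolution algebra. -/
noncomputable def convPow {k H : Type*} [CommSemiring k] [AddCommMonoid H] [Module k H]
    [Coalgebra k H] (f : Module.Dual k H) : ℕ → Module.Dual k H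
  | 0 => Coalgebra.counit
  | m + 1 => conv f (convPow f m)

open Module Polynomial in
/-- The eigenspaces of an endomorphism of finite order, indexed bijectively by roots of unity,
decompose the space. -/
theorem isInternal_eigenspace_of_pow_eq_one {k V ι : Type*} [Field k] [IsAlgClosed k] [CharZero k]
    [AddCommGroup V] [Module k V] [FiniteDimensional k V] [DecidableEq ι]
    {f : End k V} {m : ℕ} (hm : m ≠ 0) (hf : f ^ m = 1) {μ : ι → k}
    (hμ : Function.Injective μ) (hroot : ∀ x : k, x ^ m = 1 → ∃ i, μ i = x) :
    DirectSum.IsInternal fun i => f.eigenspace (μ i) := by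
  rw [DirectSum.isInternal_submodule_iff_iSupIndep_and_iSup_eq_top]
  refine ⟨f.eigenspaces_iSupIndep.comp hμ, ?_⟩
  have hss : f.IsSemisimple := by
    refine End.isSemisimple_of_squarefree_aeval_eq_zero (p := X ^ m - C 1)
      (separable_X_pow_sub_C 1 (by exact_mod_cast hm) one_ne_zero).squarefree ?_
    simp [hf]
  rw [eq_top_iff, ← hss.iSup_eigenspace_eq_top]
  refine iSup_le fun x => ?_
  by_cases hx : f.eigenspace x = ⊥
  · simp [hx]
  obtain ⟨v, hv, hv0⟩ := Submodule.exists_mem_ne_zero_of_ne_bot hx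
  obtain ⟨i, rfl⟩ : ∃ i, μ i = x := by
    refine hroot x (smul_left_injective k hv0 ?_)
    have h := (show f.HasEigenvector x v from ⟨hv, hv0⟩).pow_apply m
    simpa [hf] using h.symm
  exact le_iSup (fun i => f.eigenspace (μ i)) i

theorem DirectSum.IsInternal.sum_finrank {k V ι : Type*} [Field k] [AddCommGroup V] [Module k V]
    [FiniteDimensional k V] [Fintype ι] [DecidableEq ι] {N : ι → Submodule k V}
    (h : DirectSum.IsInternal N) : ∑ i, Module.finrank k (N i) = Module.finrank k V := by
  rw [← Module.finrank_directSum]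
  exact (LinearEquiv.ofBijective (DirectSum.coeLinearMap N) h).finrank_eq

theorem trace_eq_sum_finrank_eigenspace {k V ι : Type*} [Field k] [AddCommGroup V] [Module k V]
    [FiniteDimensional k V] [Fintype ι] [DecidableEq ι] {f : Module.End k V} {μ : ι → k}
    (h : DirectSum.IsInternal fun i => f.eigenspace (μ i)) :
    LinearMap.trace k V f = ∑ i, (Module.finrank k (f.eigenspace (μ i)) : k) * μ i := by
  have hmaps (i : ι) : Set.MapsTo f (f.eigenspace (μ i)) (f.eigenspace (μ i)) :=
    Module.End.mapsTo_genEigenspace_of_comm (Commute.refl f) _ _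
  rw [LinearMap.trace_eq_sum_trace_restrict h hmaps]
  refine Finset.sum_congr rfl fun i _ => ?_
  have hrestrict : f.restrict (hmaps i) = μ i • LinearMap.id := by
    ext x
    exact Module.End.mem_eigenspace_iff.mp x.2
  rw [hrestrict, map_smul, LinearMap.trace_id, smul_eq_mul, mul_comm]

open Polynomial in
/-- A rational linear relation among all powers of a primitive `p`-th root of unity has constant
coefficients. -/
theorem IsPrimitiveRoot.coeff_eq_of_sum_eq_zero {k : Type*} [Field k] [CharZero k] {p : ℕ}
    (hp : p.Prime) {ω : k} (hω : IsPrimitiveRoot ω p) (e : ℕ → ℚ)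
    (he : ∑ j ∈ Finset.range p, (e j : k) * ω ^ j = 0) {j : ℕ} (hj : j < p) :
    e j = e (p - 1) := by
  obtain ⟨q, rfl⟩ : ∃ q, p = q + 1 := ⟨p - 1, by have := hp.pos; omega⟩
  have hgeom := hω.geom_sum_eq_zero hp.one_lt
  rw [Finset.sum_range_succ] at he hgeom
  rcases Nat.lt_succ_iff_lt_or_eq.mp hj with hj | rfl
  swap
  · rfl
  let Q : ℚ[X] := ∑ i ∈ Finset.range q, C (e i - e q) * X ^ i
  have hQroot : aeval ω Q = 0 := by
    simp only [Q, map_sum, map_mul, aeval_C, map_pow, aeval_X, eq_ratCast, Rat.cast_sub, sub_mul,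
      Finset.sum_sub_distrib, ← Finset.mul_sum]
    linear_combination he - (e q : k) * hgeom
  have hQdeg : Q.degree < q := by
    refine (degree_sum_le _ _).trans_lt ((Finset.sup_lt_iff (WithBot.bot_lt_coe q)).mpr ?_)
    intro i hi
    exact (degree_C_mul_X_pow_le _ _).trans_lt (Nat.cast_lt.mpr (Finset.mem_range.mp hi))
  have hQ : Q = 0 := by
    by_contra hne
    have h := minpoly.degree_le_of_ne_zero ℚ ω hne hQroot
    rw [← cyclotomic_eq_minpoly_rat hω hp.pos, degree_cyclotomic, Nat.totient_prime hp] at h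
    exact absurd hQdeg (not_lt.mpr (by simpa using h))
  have h := congrArg (fun P : ℚ[X] => P.coeff j) hQ
  simp only [Q, finsetSum_coeff, coeff_C_mul, coeff_X_pow, mul_ite, mul_one, mul_zero, coeff_zero,
    Finset.sum_ite_eq, Finset.mem_range, hj, if_true] at h
  simpa using sub_eq_zero.mp h

open Coalgebra in
/-- The map `a ⊗ b ↦ (a ⊗ 1) Δ(b)`. -/
noncomputable def galoisMap (k H : Type*) [Field k] [Ring H] [HopfAlgebra k H] :
    H ⊗[k] H →ₗ[k] H ⊗[k] H :=
  (LinearMap.mul' k H).rTensor H ∘ₗ (TensorProduct.assoc k H H H).symm.toLinearMap ∘ₗ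
    (comul (R := k) (A := H)).lTensor H

section GaloisMap

open Coalgebra HopfAlgebra

variable {k H : Type*} [Field k] [Ring H] [HopfAlgebra k H]

theorem galoisMap_tmul (a b : H) :
    galoisMap k H (a ⊗ₜ b) = (a ⊗ₜ[k] (1 : H)) * comul (R := k) b := by
  simp only [galoisMap, LinearMap.comp_apply, LinearMap.lTensor_tmul, LinearEquiv.coe_coe]
  induction comul (R := k) b with
  | zero => simp
  | add x y hx hy => simp [TensorProduct.tmul_add, mul_add, hx, hy]
  | tmul x y => simp

theorem galoisMap_mul_left (a : H) (x : H ⊗[k] H) :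
    galoisMap k H ((a ⊗ₜ 1) * x) = (a ⊗ₜ 1) * galoisMap k H x := by
  induction x with
  | zero => simp
  | add x y hx hy => simp [mul_add, hx, hy]
  | tmul x y => simp [galoisMap_tmul, ← mul_assoc]

theorem galoisMap_antipode (b : H) :
    galoisMap k H ((antipode k (A := H)).rTensor H (comul b)) = 1 ⊗ₜ b := by
  have hcomm : (galoisMap k H) ∘ₗ (antipode k (A := H)).rTensor H =
      (LinearMap.mul' k H ∘ₗ (antipode k (A := H)).rTensor H).rTensor H ∘ₗ
        (TensorProduct.assoc k H H H).symm.toLinearMap ∘ₗ (comul (R := k) (A := H)).lTensor H := by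
    ext x y
    simp only [galoisMap, TensorProduct.AlgebraTensorModule.curry_apply,
      LinearMap.restrictScalars_self, TensorProduct.curry_apply, LinearMap.comp_apply, LinearMap.lTensor_tmul,
      LinearMap.rTensor_tmul, LinearEquiv.coe_coe]
    induction comul (R := k) y with
    | zero => simp
    | add u v hu hv => simp [TensorProduct.tmul_add, hu, hv]
    | tmul u v => simp
  have h := LinearMap.congr_fun hcomm (comul b)
  simp only [LinearMap.comp_apply, LinearEquiv.coe_coe, coassoc_symm_apply] at h
  rw [h, ← LinearMap.rTensor_comp_apply, LinearMap.comp_assoc, mul_antipode_rTensor_comul,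
    LinearMap.rTensor_comp_apply, rTensor_counit_comul]
  simp

theorem galoisMap_surjective : Function.Surjective (galoisMap k H) := by
  rw [← LinearMap.range_eq_top, eq_top_iff]
  intro x _
  induction x with
  | zero => exact zero_mem _
  | add x y hx hy => exact add_mem (hx trivial) (hy trivial)
  | tmul a b =>
    refine ⟨(a ⊗ₜ 1) * (antipode k (A := H)).rTensor H (comul b), ?_⟩
    simp [galoisMap_mul_left, galoisMap_antipode]

theorem galoisMap_comp_mulRight {g : H} (hg : comul (R := k) g = g ⊗ₜ[k] g) :
    galoisMap k H ∘ₗ TensorProduct.map LinearMap.id (LinearMap.mulRight k g) =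
      TensorProduct.map (LinearMap.mulRight k g) (LinearMap.mulRight k g) ∘ₗ galoisMap k H := by
  have hmap (x : H ⊗[k] H) :
      TensorProduct.map (LinearMap.mulRight k g) (LinearMap.mulRight k g) x = x * g ⊗ₜ g := by
    induction x with
    | zero => simp
    | add x y hx hy => simp [add_mul, hx, hy]
    | tmul x y => simp
  refine TensorProduct.ext' fun a b => ?_
  simp [hmap, galoisMap_tmul, hg, mul_assoc, Bialgebra.comul_mul]

/-- Right multiplication by a group-like element has trace `0` or `dim H`, since `id ⊗ R_g` and
`R_g ⊗ R_g` are conjugate. -/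
theorem trace_mulRight_eq_zero_or_eq_finrank [FiniteDimensional k H] {g : H}
    (hg : comul (R := k) g = g ⊗ₜ[k] g) :
    LinearMap.trace k H (LinearMap.mulRight k g) = 0 ∨
      LinearMap.trace k H (LinearMap.mulRight k g) = (Module.finrank k H : k) := by
  let E : H ⊗[k] H ≃ₗ[k] H ⊗[k] H := LinearEquiv.ofBijective (galoisMap k H)
    ⟨LinearMap.injective_iff_surjective.mpr galoisMap_surjective, galoisMap_surjective⟩
  have hconj : E.conj (TensorProduct.map LinearMap.id (LinearMap.mulRight k g)) =
      TensorProduct.map (LinearMap.mulRight k g) (LinearMap.mulRight k g) := by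
    refine LinearMap.ext fun x => ?_
    obtain ⟨y, rfl⟩ := E.surjective x
    rw [LinearEquiv.conj_apply_apply, E.symm_apply_apply]
    exact LinearMap.congr_fun (galoisMap_comp_mulRight hg) y
  have htrace := LinearMap.trace_conj' (TensorProduct.map LinearMap.id (LinearMap.mulRight k g)) E
  rw [hconj, LinearMap.trace_tensorProduct', LinearMap.trace_tensorProduct', LinearMap.trace_id]
    at htrace
  rcases mul_eq_mul_right_iff.mp htrace with h | h
  · exact Or.inr h
  · exact Or.inl h

end GaloisMap

theorem IsGroupLike.isGroupLikeElem {k H : Type*} [Field k] [Ring H] [HopfAlgebra k H] {g : H}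
    (hg : IsGroupLike k g) : IsGroupLikeElem k g := by
  refine ⟨smul_left_injective k hg.1 ?_, hg.2⟩
  have h := Coalgebra.rTensor_counit_comul (R := k) g
  rw [hg.2, LinearMap.rTensor_tmul] at h
  simpa using congrArg (TensorProduct.lid k H) h

theorem commute_antipode_sq_mulRight {k H : Type*} [Field k] [Ring H] [HopfAlgebra k H] {g : H}
    (hg : IsGroupLikeElem k g) :
    Commute ((HopfAlgebra.antipode k (A := H) : Module.End k H) ^ 2) (LinearMap.mulRight k g) := by
  ext u
  simp [pow_two, HopfAlgebra.antipode_mul_antidistrib, hg.antipode_antipode]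

theorem sum_zmod_val {M : Type*} [AddCommMonoid M] {p : ℕ} [NeZero p] (F : ℕ → M) :
    ∑ i : ZMod p, F i.val = ∑ i ∈ Finset.range p, F i :=
  Finset.sum_nbij ZMod.val (by simp [ZMod.val_lt]) (ZMod.val_injective p).injOn
    (fun i hi => ⟨i, by simp, ZMod.val_cast_of_lt (by simpa using hi)⟩) fun _ _ => rfl

open Module in
theorem finrank_eigenspace_mulRight {k H : Type*} [Field k] [IsAlgClosed k] [CharZero k]
    [Ring H] [HopfAlgebra k H] [FiniteDimensional k H] {p : ℕ} (hp : p.Prime) [NeZero p]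
    {g : H} (hg : IsGroupLikeElem k g) (hg1 : g ≠ 1) (hgp : g ^ p = 1) {ω : k}
    (hω : IsPrimitiveRoot ω p) (j : ZMod p) :
    p * finrank k (End.eigenspace (LinearMap.mulRight k g : End k H) (ω ^ j.val)) =
      finrank k H := by
  set R : End k H := LinearMap.mulRight k g
  have hRp : R ^ p = 1 := by
    rw [LinearMap.pow_mulRight, hgp, LinearMap.mulRight_one]
    rfl
  have hint : DirectSum.IsInternal fun i : ZMod p => R.eigenspace (ω ^ i.val) := by
    refine isInternal_eigenspace_of_pow_eq_one hp.ne_zero hRp (fun a b hab => ?_) fun x hx => ?_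
    · exact ZMod.val_injective p (hω.pow_inj a.val_lt b.val_lt hab)
    · obtain ⟨i, hi, rfl⟩ := hω.eq_pow_of_pow_eq_one hx
      exact ⟨i, by rw [ZMod.val_cast_of_lt hi]⟩
  set d : ℕ → ℕ := fun i => finrank k (R.eigenspace (ω ^ i))
  have hsum : ∑ i ∈ Finset.range p, d i = finrank k H := by
    rw [← hint.sum_finrank, sum_zmod_val d]
  have htrace : LinearMap.trace k H R = ∑ i ∈ Finset.range p, (d i : k) * ω ^ i := by
    rw [trace_eq_sum_finrank_eigenspace hint, sum_zmod_val fun i => (d i : k) * ω ^ i]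
  rcases trace_mulRight_eq_zero_or_eq_finrank hg.comul_eq_tmul_self with h | h
  · have hconst (i : ℕ) (hi : i < p) : d i = d (p - 1) := by
      have := hω.coeff_eq_of_sum_eq_zero hp (fun i => (d i : ℚ))
        (by simpa using htrace.symm.trans h) hi
      exact_mod_cast this
    rw [← hsum, Finset.sum_congr rfl fun i hi => hconst i (Finset.mem_range.mp hi),
      Finset.sum_const, Finset.card_range, smul_eq_mul, ← hconst j.val j.val_lt]
  · exfalso
    have hrel := fun i => hω.coeff_eq_of_sum_eq_zero (j := i) hp
      (fun i => (d i : ℚ) - if i = 0 then (finrank k H : ℚ) else 0) (by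
        have := htrace.symm.trans h
        simp only [Rat.cast_sub, sub_mul, Finset.sum_sub_distrib]
        simpa [sub_eq_zero, apply_ite (Rat.cast : ℚ → k), hp.pos] using this)
    have hlast : p - 1 ≠ 0 := by have := hp.two_le; omega
    have h0 := hrel 0 hp.pos
    simp only [if_true, hlast, if_false, sub_zero] at h0
    have hle : d 0 ≤ finrank k H := Submodule.finrank_le _
    have hd0 : d 0 = finrank k H := by
      have hnn : (0 : ℚ) ≤ d (p - 1) := Nat.cast_nonneg _
      have : (finrank k H : ℚ) ≤ d 0 := by linarith
      exact le_antisymm hle (by exact_mod_cast this)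
    have htop : R.eigenspace (ω ^ 0) = ⊤ := Submodule.eq_top_of_finrank_eq hd0
    have hone : (1 : H) ∈ R.eigenspace (ω ^ 0) := htop ▸ Submodule.mem_top
    rw [End.mem_eigenspace_iff] at hone
    exact hg1 (by simpa [R] using hone)

/-- The scalars `(-1)^a ω^i` enumerate the `2p`-th roots of unity without repetition. -/
theorem bijective_neg_one_pow_mul_pow {k : Type*} [Field k] [CharZero k] {p : ℕ} [NeZero p]
    (hp : Odd p) {ω : k} (hω : IsPrimitiveRoot ω p) :
    Function.Injective (fun t : ZMod 2 × ZMod p => (-1 : k) ^ t.1.val * ω ^ t.2.val) ∧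
      ∀ x : k, x ^ (2 * p) = 1 →
        ∃ t : ZMod 2 × ZMod p, (-1 : k) ^ t.1.val * ω ^ t.2.val = x := by
  have hpow (a : ZMod 2) (i : ZMod p) :
      ((-1 : k) ^ a.val * ω ^ i.val) ^ p = (-1) ^ a.val := by
    rw [mul_pow, ← pow_mul, mul_comm a.val, pow_mul, hp.neg_one_pow, ← pow_mul, mul_comm i.val,
      pow_mul, hω.pow_eq_one, one_pow, mul_one]
  constructor
  · rintro ⟨a, i⟩ ⟨b, j⟩ h
    have hab : (-1 : k) ^ a.val = (-1) ^ b.val := by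
      simpa only [hpow] using congrArg (· ^ p) h
    have hij : ω ^ i.val = ω ^ j.val := by
      refine mul_left_cancel₀ (pow_ne_zero a.val (neg_ne_zero.mpr (one_ne_zero (α := k)))) ?_
      simpa [hab] using h
    have h2 : IsPrimitiveRoot (-1 : k) 2 := IsPrimitiveRoot.neg_one 0 (by norm_num)
    exact Prod.ext (ZMod.val_injective 2 (h2.pow_inj a.val_lt b.val_lt hab))
      (ZMod.val_injective p (hω.pow_inj i.val_lt j.val_lt hij))
  · intro x hx
    rw [mul_comm, pow_mul] at hx
    rcases eq_or_eq_neg_of_sq_eq_sq (x ^ p) 1 (hx.trans (one_pow 2).symm) with hx | hx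
    · obtain ⟨i, hi, rfl⟩ := hω.eq_pow_of_pow_eq_one hx
      exact ⟨(0, i), by simp [ZMod.val_cast_of_lt hi]⟩
    · obtain ⟨i, hi, h⟩ := hω.eq_pow_of_pow_eq_one (ξ := -x) (by rw [hp.neg_pow, hx, neg_neg])
      exact ⟨(1, i), by simp [ZMod.val_cast_of_lt hi, h, ZMod.val_one]⟩

/-- Lemma 5.6. Let `p` be an odd prime, `H` a Hopf algebra of index `p` over
an algebraically closed field of characteristic `0` such that `H*` is not unimodular (i.e. the
distinguished group-like element `g ≠ 1`), and `ω` a primitive `p`-th root of unity. Then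
`p ∣ dim H` and, for each `j ∈ ℤ/p`, `∑_{(a,i) ∈ ℤ/2 × ℤ/p} dim H^ω_{a,i,j} = dim H / p`. -/
theorem stmt8 (k : Type*) [Field k] [IsAlgClosed k] [CharZero k]
    (p : ℕ) (hp : p.Prime) (hpodd : Odd p) [NeZero p]
    (H : Type*) [Ring H] [HopfAlgebra k H] [FiniteDimensional k H]
    (g : H) (hg : IsDistinguishedGroupLike k g) (hg1 : g ≠ 1) (hidx : IsHopfIndex k g p)
    (ω : k) (hω : IsPrimitiveRoot ω p) :
    p ∣ Module.finrank k H ∧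
      ∀ j : ZMod p,
        ∑ t : ZMod 2 × ZMod p, Module.finrank k (hopfEigenspace g ω (t.1, t.2, j)) =
          Module.finrank k H / p := by
  obtain ⟨-, hS, hgp, -⟩ := hidx
  have hgl := hg.1.isGroupLikeElem
  have hdim := finrank_eigenspace_mulRight hp hgl hg1 hgp hω
  refine ⟨⟨_, (hdim 0).symm⟩, fun j => ?_⟩
  rw [← hdim j, Nat.mul_div_cancel_left _ hp.pos]
  set E := Module.End.eigenspace (LinearMap.mulRight k g : Module.End k H) (ω ^ j.val)
  set T : Module.End k H := (HopfAlgebra.antipode k (A := H) : Module.End k H) ^ 2 with hT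
  have hTE : ∀ x ∈ E, T x ∈ E :=
    Module.End.mapsTo_genEigenspace_of_comm (commute_antipode_sq_mulRight hgl).symm _ _
  have hpow : (T.restrict hTE) ^ (2 * p) = 1 := by
    rw [Module.End.pow_restrict]
    ext x
    rw [LinearMap.coe_restrict_apply, hT, ← pow_mul, ← mul_assoc,
      show 2 * 2 * p = 4 * p from rfl, hS]
    rfl
  obtain ⟨hinj, hroot⟩ := bijective_neg_one_pow_mul_pow hpodd hω
  rw [← (isInternal_eigenspace_of_pow_eq_one (mul_ne_zero two_ne_zero hp.ne_zero) hpow hinj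
    hroot).sum_finrank]
  refine Finset.sum_congr rfl fun t _ => ?_
  rw [hopfEigenspace, inf_comm, Submodule.inf_genEigenspace _ _ hTE]
  exact Submodule.finrank_map_subtype_eq _ _
end

section
/- Let p be an odd prime, H a Hopf algebra over k of index p such that H is unimodular and H* is not unimodular, and ω ∈ k a primitive p-th root of unity. Then there exists a single integer d such that dim H^ω_{0,i,j} − dim H^ω_{1,i,j} = d for all i, j ∈ Z_p. -/
open scoped TensorProduct

open Coalgebra HopfAlgebra

section HopfIdentities

variable {k H : Type*} [Field k] [Ring H] [HopfAlgebra k H]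

lemma sum_smul_counit {a : H} {ι : Type*} (r : Repr k a ι) :
    ∑ i ∈ r.index, counit (R := k) (r.right i) • r.left i = a := by
  simpa [-sum_tmul_counit_eq] using congr(TensorProduct.rid k H $(sum_tmul_counit_eq (R := k) r))

/-- `b ⊗ 1 = Σ Δ(b₁) (1 ⊗ S(b₂))`. -/
lemma sum_comul_left_mul_one_tmul_antipode {b : H} {ι : Type*} (r : Repr k b ι) :
    ∑ i ∈ r.index, comul (R := k) (r.left i) * (1 ⊗ₜ[k] antipode k (r.right i)) =
      b ⊗ₜ[k] 1 := by
  have key := congr(((LinearMap.mul' k H ∘ₗ (antipode k).lTensor H).lTensor H)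
    $(coassoc_apply (R := k) b))
  have hR : ((LinearMap.mul' k H ∘ₗ (antipode k).lTensor H).lTensor H)
      ((comul (R := k)).lTensor H (comul (R := k) b)) = b ⊗ₜ[k] 1 := by
    rw [← LinearMap.comp_apply, ← LinearMap.lTensor_comp, LinearMap.comp_assoc,
      mul_antipode_lTensor_comul, LinearMap.lTensor_comp, LinearMap.comp_apply,
      lTensor_counit_comul]
    simp
  rw [hR, ← r.eq] at key
  rw [← key]
  simp only [map_sum, LinearMap.rTensor_tmul]
  refine Finset.sum_congr rfl fun i _ ↦ ?_
  generalize comul (R := k) (r.left i) = X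
  induction X using TensorProduct.induction_on with
  | zero => simp
  | tmul x y => simp
  | add X Y hX hY => simp only [add_mul, hX, hY, map_add, TensorProduct.add_tmul]

/-- `1 ⊗ a = Σ (S(a₁) ⊗ 1) Δ(a₂)`. -/
lemma sum_antipode_tmul_one_mul_comul_right {a : H} {ι : Type*} (r : Repr k a ι) :
    ∑ i ∈ r.index, (antipode k (r.left i) ⊗ₜ[k] 1) * comul (R := k) (r.right i) =
      1 ⊗ₜ[k] a := by
  have key := congr(((LinearMap.mul' k H ∘ₗ (antipode k).rTensor H).rTensor H)
    $(coassoc_symm_apply (R := k) a))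
  have hR : ((LinearMap.mul' k H ∘ₗ (antipode k).rTensor H).rTensor H)
      ((comul (R := k)).rTensor H (comul (R := k) a)) = 1 ⊗ₜ[k] a := by
    rw [← LinearMap.comp_apply, ← LinearMap.rTensor_comp, LinearMap.comp_assoc,
      mul_antipode_rTensor_comul, LinearMap.rTensor_comp, LinearMap.comp_apply,
      rTensor_counit_comul]
    simp
  rw [hR, ← r.eq] at key
  rw [← key]
  simp only [map_sum, LinearMap.lTensor_tmul]
  refine Finset.sum_congr rfl fun i _ ↦ ?_
  generalize comul (R := k) (r.right i) = X
  induction X using TensorProduct.induction_on with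
  | zero => simp
  | tmul x y => simp
  | add X Y hX hY => simp only [mul_add, hX, hY, map_add, TensorProduct.tmul_add]

/-- The slice map `x ⊗ y ↦ l(x) y`. -/
noncomputable def leftSlice (l : Module.Dual k H) : H ⊗[k] H →ₗ[k] H :=
  TensorProduct.lift ((LinearMap.lsmul k H).comp l)

/-- The slice map `x ⊗ y ↦ l(y) x`. -/
noncomputable def rightSlice (l : Module.Dual k H) : H ⊗[k] H →ₗ[k] H :=
  TensorProduct.lift ((LinearMap.lsmul k H).comp l).flip

@[simp] lemma leftSlice_tmul (l : Module.Dual k H) (x y : H) :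
    leftSlice l (x ⊗ₜ y) = l x • y := rfl

@[simp] lemma rightSlice_tmul (l : Module.Dual k H) (x y : H) :
    rightSlice l (x ⊗ₜ y) = l y • x := rfl

lemma leftSlice_mul_one_tmul (l : Module.Dual k H) (X : H ⊗[k] H) (c : H) :
    leftSlice l (X * (1 ⊗ₜ c)) = leftSlice l X * c := by
  induction X using TensorProduct.induction_on with
  | zero => simp
  | tmul x y => simp
  | add X Y hX hY => simp only [add_mul, hX, hY, map_add]

lemma rightSlice_tmul_one_mul (l : Module.Dual k H) (X : H ⊗[k] H) (c : H) :
    rightSlice l ((c ⊗ₜ 1) * X) = c * rightSlice l X := by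
  induction X using TensorProduct.induction_on with
  | zero => simp
  | tmul x y => simp
  | add X Y hX hY => simp only [mul_add, hX, hY, map_add]

lemma conv_eq_apply_leftSlice (l f : Module.Dual k H) (h : H) :
    conv l f h = f (leftSlice l (comul (R := k) h)) := by
  simp only [conv, LinearMap.comp_apply]
  generalize comul (R := k) h = X
  induction X using TensorProduct.induction_on with
  | zero => simp
  | tmul x y => simp
  | add X Y hX hY => simp only [hX, hY, map_add]

lemma conv_eq_apply_rightSlice (l f : Module.Dual k H) (h : H) :
    conv f l h = f (rightSlice l (comul (R := k) h)) := by
  simp only [conv, LinearMap.comp_apply]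
  generalize comul (R := k) h = X
  induction X using TensorProduct.induction_on with
  | zero => simp
  | tmul x y => simp [mul_comm]
  | add X Y hX hY => simp only [hX, hY, map_add]

lemma eq_of_forall_dual_apply_eq {V : Type*} [AddCommGroup V] [Module k V] {x y : V}
    (h : ∀ f : Module.Dual k V, f x = f y) : x = y :=
  sub_eq_zero.1 <| (Module.forall_dual_apply_eq_zero_iff k _).1 fun f ↦ by rw [map_sub, h, sub_self]

lemma leftSlice_comul {l : Module.Dual k H} (hl : IsRightIntegralDual k l) (h : H) :
    leftSlice l (comul (R := k) h) = l h • 1 :=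
  eq_of_forall_dual_apply_eq fun f ↦ by
    rw [← conv_eq_apply_leftSlice, hl f]; simp [mul_comm]

lemma rightSlice_comul {l : Module.Dual k H} {g : H}
    (hl : ∀ f : Module.Dual k H, conv f l = f g • l) (h : H) :
    rightSlice l (comul (R := k) h) = l h • g :=
  eq_of_forall_dual_apply_eq fun f ↦ by
    rw [← conv_eq_apply_rightSlice, hl f]; simp [mul_comm]

/-- `l(a₁ b) a₂ = l(a b₁) S(b₂)` for a right integral `l` of the dual. -/
lemma leftSlice_comul_mul_tmul_one {l : Module.Dual k H} (hl : IsRightIntegralDual k l)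
    (a : H) {b : H} {ι : Type*} (r : Repr k b ι) :
    leftSlice l (comul (R := k) a * (b ⊗ₜ 1)) =
      ∑ i ∈ r.index, l (a * r.left i) • antipode k (r.right i) := by
  rw [← sum_comul_left_mul_one_tmul_antipode r, Finset.mul_sum, map_sum]
  refine Finset.sum_congr rfl fun i _ ↦ ?_
  rw [← mul_assoc, ← Bialgebra.comul_mul, leftSlice_mul_one_tmul, leftSlice_comul hl,
    smul_mul_assoc, one_mul]

/-- `l(a b₂) b₁ = l(a₂ b) S(a₁) g`. -/
lemma rightSlice_one_tmul_mul_comul {l : Module.Dual k H} {g : H}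
    (hl : ∀ f : Module.Dual k H, conv f l = f g • l)
    {a : H} (b : H) {ι : Type*} (r : Repr k a ι) :
    rightSlice l ((1 ⊗ₜ a) * comul (R := k) b) =
      ∑ i ∈ r.index, l (r.right i * b) • (antipode k (r.left i) * g) := by
  rw [← sum_antipode_tmul_one_mul_comul_right r, Finset.sum_mul, map_sum]
  refine Finset.sum_congr rfl fun i _ ↦ ?_
  rw [mul_assoc, ← Bialgebra.comul_mul, rightSlice_tmul_one_mul, rightSlice_comul hl,
    mul_smul_comm]

lemma comul_mul_tmul_one_of_isLeftIntegral {L : H} (hL : IsLeftIntegral k L) (a : H) :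
    comul (R := k) a * (L ⊗ₜ 1) = L ⊗ₜ a := by
  conv_rhs => rw [← sum_counit_smul (ℛ k a), TensorProduct.tmul_sum]
  conv_lhs => rw [← (ℛ k a).eq, Finset.sum_mul]
  refine Finset.sum_congr rfl fun i _ ↦ ?_
  rw [Algebra.TensorProduct.tmul_mul_tmul, hL, mul_one, TensorProduct.smul_tmul]

lemma one_tmul_mul_comul_of_isRightIntegral {L : H} (hL : IsRightIntegral k L) (b : H) :
    (1 ⊗ₜ L) * comul (R := k) b = b ⊗ₜ L := by
  conv_rhs => rw [← sum_smul_counit (ℛ k b), TensorProduct.sum_tmul]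
  conv_lhs => rw [← (ℛ k b).eq, Finset.mul_sum]
  refine Finset.sum_congr rfl fun i _ ↦ ?_
  rw [Algebra.TensorProduct.tmul_mul_tmul, hL, one_mul, TensorProduct.smul_tmul]

variable {ι : Type*} {L : H} (r : Repr k L ι) {l : Module.Dual k H}

lemma sum_apply_mul_left_smul_antipode_right (hL : IsLeftIntegral k L)
    (hl : IsRightIntegralDual k l) (a : H) :
    ∑ i ∈ r.index, l (a * r.left i) • antipode k (r.right i) = l L • a := by
  rw [← leftSlice_comul_mul_tmul_one hl, comul_mul_tmul_one_of_isLeftIntegral hL, leftSlice_tmul]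

lemma sum_apply_left_mul_smul_right (hL : IsRightIntegral k L)
    (hl : IsRightIntegralDual k l) (b : H) :
    ∑ i ∈ r.index, l (r.left i * b) • r.right i = l L • antipode k b := by
  have h := leftSlice_comul_mul_tmul_one hl L (ℛ k b)
  rw [← r.eq, Finset.sum_mul, map_sum] at h
  simp only [Algebra.TensorProduct.tmul_mul_tmul, mul_one, leftSlice_tmul, hL _, map_smul] at h
  rw [h]
  conv_rhs => rw [← sum_counit_smul (ℛ k b), map_sum, Finset.smul_sum]
  refine Finset.sum_congr rfl fun i _ ↦ ?_
  rw [map_smul, smul_smul, smul_eq_mul, mul_comm]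

lemma sum_apply_mul_right_smul_left (hL : IsLeftIntegral k L) {g : H}
    (hl : ∀ f : Module.Dual k H, conv f l = f g • l) (a : H) :
    ∑ i ∈ r.index, l (a * r.right i) • r.left i = l L • (antipode k a * g) := by
  have h := rightSlice_one_tmul_mul_comul hl L (ℛ k a)
  rw [← r.eq, Finset.mul_sum, map_sum] at h
  simp only [Algebra.TensorProduct.tmul_mul_tmul, one_mul, rightSlice_tmul, hL _, map_smul] at h
  rw [h]
  conv_rhs => rw [← sum_smul_counit (ℛ k a), map_sum, Finset.sum_mul, Finset.smul_sum]
  refine Finset.sum_congr rfl fun i _ ↦ ?_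
  rw [map_smul, smul_mul_assoc, smul_smul, smul_eq_mul, mul_comm]

lemma sum_apply_right_mul_smul_antipode_left (hL : IsRightIntegral k L) {g : H}
    (hl : ∀ f : Module.Dual k H, conv f l = f g • l) (b : H) :
    ∑ i ∈ r.index, l (r.right i * b) • (antipode k (r.left i) * g) = l L • b := by
  rw [← rightSlice_one_tmul_mul_comul hl, one_tmul_mul_comul_of_isRightIntegral hL,
    rightSlice_tmul]

end HopfIdentities

section Radford

variable {k H : Type*} [Field k] [Ring H] [HopfAlgebra k H]

section Nondegenerate

variable {l : Module.Dual k H}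

lemma sum_apply_mul_left_smul_right_eq_zero
    (hS : Function.Injective (antipode k : H →ₗ[k] H)) (hl : IsRightIntegralDual k l)
    {b : H} (hb : ∀ a, l (a * b) = 0) {ι : Type*} (r : Repr k b ι) (a : H) :
    ∑ i ∈ r.index, l (a * r.left i) • r.right i = 0 := by
  apply hS
  rw [map_zero, map_sum]
  simp only [map_smul]
  rw [← leftSlice_comul_mul_tmul_one hl a r, ← (ℛ k a).eq, Finset.sum_mul, map_sum]
  simp [hb]

lemma sum_inverse_antipode_right_mul_left
    (hS : Function.Bijective (antipode k : H →ₗ[k] H)) {b : H} {ι : Type*} (r : Repr k b ι) :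
    ∑ i ∈ r.index, (LinearEquiv.ofBijective (antipode k) hS).symm (r.right i) * r.left i =
      counit (R := k) b • 1 := by
  apply hS.1
  have h (y : H) : antipode k ((LinearEquiv.ofBijective (antipode k) hS).symm y) = y :=
    (LinearEquiv.ofBijective (antipode k) hS).apply_symm_apply y
  simp only [map_sum, antipode_mul_antidistrib, h, map_smul, antipode_one]
  exact sum_antipode_mul_eq_smul r

variable [FiniteDimensional k H]

lemma counit_eq_zero_of_forall_apply_mul_eq_zero
    (hS : Function.Bijective (antipode k : H →ₗ[k] H)) (hl : IsRightIntegralDual k l)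
    (hl0 : l ≠ 0) {b : H} (hb : ∀ a, l (a * b) = 0) : counit (R := k) b = 0 := by
  obtain ⟨a, ha⟩ : ∃ a, l a ≠ 0 := by
    by_contra! h
    exact hl0 (LinearMap.ext h)
  set e := LinearEquiv.ofBijective (antipode k : H →ₗ[k] H) hS
  let r := ℛ k b
  have hzero : ∑ i ∈ r.index, (l ∘ₗ LinearMap.mulRight k (r.left i)).smulRight
      (a * e.symm (r.right i)) = 0 := by
    ext z
    have h := sum_apply_mul_left_smul_right_eq_zero hS.1 hl hb r z
    simpa [Finset.mul_sum] using congr(a * e.symm $h)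
  have h := congr(LinearMap.trace k H $hzero)
  simp only [map_sum, LinearMap.trace_smulRight, LinearMap.comp_apply, LinearMap.mulRight_apply,
    mul_assoc, map_zero] at h
  rw [← map_sum, ← Finset.mul_sum, sum_inverse_antipode_right_mul_left hS r] at h
  simpa [ha] using h

/-- A nonzero right integral of the dual induces a nondegenerate bilinear form. -/
lemma eq_zero_of_forall_apply_mul_eq_zero
    (hS : Function.Bijective (antipode k : H →ₗ[k] H)) (hl : IsRightIntegralDual k l)
    (hl0 : l ≠ 0) {b : H} (hb : ∀ a, l (a * b) = 0) : b = 0 := by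
  refine (Module.forall_dual_apply_eq_zero_iff k _).1 fun f ↦ ?_
  let r := ℛ k b
  have h := counit_eq_zero_of_forall_apply_mul_eq_zero hS hl hl0
    (b := ∑ i ∈ r.index, f (r.right i) • r.left i) fun a ↦ by
      simpa [Finset.mul_sum, mul_comm] using
        congr(f $(sum_apply_mul_left_smul_right_eq_zero hS.1 hl hb r a))
  rw [← sum_counit_smul r]
  simpa [mul_comm] using h

lemma apply_integral_ne_zero
    (hS : Function.Bijective (antipode k : H →ₗ[k] H)) (hl : IsRightIntegralDual k l)
    (hl0 : l ≠ 0) {L : H} (hL : IsLeftIntegral k L) (hL0 : L ≠ 0) : l L ≠ 0 := fun h ↦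
  hL0 <| eq_zero_of_forall_apply_mul_eq_zero hS hl hl0 fun a ↦ by simp [hL a, h]

end Nondegenerate

section

variable {l : Module.Dual k H} {L g : H}

/-- `Tr(x ↦ S²(x) y) = ε(L) l(y) / l(L)`. -/
lemma apply_integral_mul_trace_mulRight_comp_antipode_sq [FiniteDimensional k H]
    (hl : IsRightIntegralDual k l) (hL : IsRightIntegral k L) (y : H) :
    l L * LinearMap.trace k H (LinearMap.mulRight k y * (antipode k : Module.End k H) ^ 2) =
      counit (R := k) L * l y := by
  let r := ℛ k L
  have h : l L • (LinearMap.mulRight k y * (antipode k : Module.End k H) ^ 2) =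
      ∑ i ∈ r.index, (l ∘ₗ LinearMap.mulLeft k (r.left i)).smulRight
        (antipode k (r.right i) * y) := by
    ext b
    have := congr((antipode k $(sum_apply_left_mul_smul_right r hL hl b)) * y)
    simpa [Finset.sum_mul, pow_two] using this.symm
  rw [← smul_eq_mul, ← map_smul, h]
  simp only [map_sum, LinearMap.trace_smulRight, LinearMap.comp_apply, LinearMap.mulLeft_apply,
    ← mul_assoc]
  rw [← map_sum, ← Finset.sum_mul, sum_mul_antipode_eq_smul r]
  simp

/-- The Nakayama automorphism of the form induced by `l` is `S²` in the unimodular case. -/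
lemma apply_mul_eq_apply_antipode_sq_mul
    (hS : Function.Bijective (antipode k : H →ₗ[k] H)) (hl : IsRightIntegralDual k l)
    (hlg : ∀ f : Module.Dual k H, conv f l = f g • l) (hg : IsUnit g)
    (hL : IsLeftIntegral k L) (hL' : IsRightIntegral k L) (hlL : l L ≠ 0) (a b : H) :
    l (a * b) = l (antipode k (antipode k b) * a) := by
  let r := ℛ k L
  let f : Module.Dual k H :=
    l ∘ₗ LinearMap.mulRight k b - l ∘ₗ LinearMap.mulLeft k (antipode k (antipode k b))
  have hf : ∑ i ∈ r.index, f (r.left i) • r.right i = 0 := by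
    apply hS.1
    have h₁ := congr(antipode k $(sum_apply_left_mul_smul_right r hL' hl b))
    have h₂ := sum_apply_mul_left_smul_antipode_right r hL hl (antipode k (antipode k b))
    simp only [map_sum, map_smul] at h₁
    simp [f, sub_smul, h₁, h₂]
  obtain ⟨u, rfl⟩ := hg
  obtain ⟨c, hc⟩ := hS.2 (a * ↑u⁻¹)
  have h := congr(f $(sum_apply_mul_right_smul_left r hL hlg c))
  have h' := congr(l (c * $hf))
  simp only [Finset.mul_sum, mul_smul_comm, map_sum, map_smul, mul_zero, map_zero, hc,
    smul_eq_mul, Units.inv_mul_cancel_right] at h h'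
  simp only [mul_comm (l _)] at h
  rw [h'] at h
  have : f a = 0 := by simpa [hlL] using h.symm
  simpa [f, sub_eq_zero] using this

/-- Radford's formula for `S⁴` in the unimodular case. -/
lemma antipode_pow_four_mul_eq
    (hS : Function.Bijective (antipode k : H →ₗ[k] H)) (hl : IsRightIntegralDual k l)
    (hlg : ∀ f : Module.Dual k H, conv f l = f g • l) (hg : g * antipode k g = 1)
    (hg' : IsUnit g)
    (hL : IsLeftIntegral k L) (hL' : IsRightIntegral k L) (hlL : l L ≠ 0) (b : H) :
    ((antipode k : Module.End k H) ^ 4) b * g = g * b := by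
  let r := ℛ k L
  have h₁ := sum_apply_right_mul_smul_antipode_left r hL' hlg b
  have h₂ := congr(g * (antipode k
    $(sum_apply_mul_right_smul_left r hL hlg (antipode k (antipode k b)))) * g)
  simp only [← apply_mul_eq_apply_antipode_sq_mul hS hl hlg hg' hL hL' hlL] at h₂
  simp only [map_sum, map_smul, mul_assoc, Finset.sum_mul, smul_mul_assoc, h₁, mul_smul_comm,
    antipode_mul_antidistrib] at h₂
  rw [← mul_assoc g (antipode k g), hg, one_mul] at h₂
  simpa [pow_succ] using (smul_right_injective H hlL h₂).symm

lemma apply_eq_zero_of_comul_eq (hl : IsRightIntegralDual k l)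
    (hlg : ∀ f : Module.Dual k H, conv f l = f g • l) (hg : g ≠ 1) {y : H}
    (hy : comul (R := k) y = y ⊗ₜ[k] y) : l y = 0 := by
  by_contra h
  have h₁ := leftSlice_comul hl y
  have h₂ := rightSlice_comul hlg y
  rw [hy] at h₁ h₂
  exact hg (smul_right_injective H h (h₂.symm.trans h₁))

end

end Radford

section RootsOfUnity

variable {k V : Type*} [Field k] [AddCommGroup V] [Module k V]

/-- For `T ^ n = 1` and `μ ^ n = 1`, the projection onto the `μ`-eigenspace of `T`. -/
noncomputable def eigenProj (T : Module.End k V) (n : ℕ) (μ : k) : Module.End k V :=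
  (n : k)⁻¹ • ∑ m ∈ Finset.range n, μ⁻¹ ^ m • T ^ m

lemma isProj_eigenProj [CharZero k] {T : Module.End k V} {n : ℕ} (hn : n ≠ 0) (hT : T ^ n = 1)
    {μ : k} (hμ : μ ^ n = 1) : LinearMap.IsProj (T.eigenspace μ) (eigenProj T n μ) := by
  have hμ0 : μ ≠ 0 := by
    rintro rfl
    simp [hn] at hμ
  have hn' : (n : k) ≠ 0 := Nat.cast_ne_zero.2 hn
  refine ⟨fun x ↦ ?_, fun x hx ↦ ?_⟩
  · have hshift : ∑ m ∈ Finset.range n, (μ ^ m)⁻¹ • T ^ m =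
        ∑ m ∈ Finset.range n, (μ ^ (m + 1))⁻¹ • T ^ (m + 1) := by
      have h := (Finset.sum_range_succ (fun m ↦ (μ ^ m)⁻¹ • T ^ m) n).symm.trans
        (Finset.sum_range_succ' (fun m ↦ (μ ^ m)⁻¹ • T ^ m) n)
      simpa [hT, hμ] using h
    have hcomm : T * eigenProj T n μ = μ • eigenProj T n μ := by
      simp only [eigenProj, inv_pow]
      conv_rhs => rw [hshift]
      rw [mul_smul_comm, Finset.mul_sum, smul_comm μ, Finset.smul_sum (r := μ)]
      congr 1
      refine Finset.sum_congr rfl fun m _ ↦ ?_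
      rw [mul_smul_comm, ← pow_succ', smul_smul]
      congr 1
      rw [pow_succ, mul_inv]
      field_simp
    exact Module.End.mem_eigenspace_iff.2 congr($hcomm x)
  · have hpow (m : ℕ) : (T ^ m) x = μ ^ m • x := by
      induction m with
      | zero => simp
      | succ m ih =>
        rw [pow_succ, Module.End.mul_apply, Module.End.mem_eigenspace_iff.1 hx, map_smul, ih,
          smul_smul, pow_succ']
    simp [eigenProj, hpow, smul_smul, hμ0, ← Nat.cast_smul_eq_nsmul k, hn']

lemma LinearMap.IsProj.mul_of_commute {p q : Submodule k V} {P Q : Module.End k V}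
    (hP : LinearMap.IsProj p P) (hQ : LinearMap.IsProj q Q) (h : Commute P Q) :
    LinearMap.IsProj (p ⊓ q) (P * Q) :=
  ⟨fun x ↦ ⟨hP.map_mem _, h.eq ▸ hQ.map_mem _⟩, fun x hx ↦ by
    rw [Module.End.mul_apply, hQ.map_id x hx.2, hP.map_id x hx.1]⟩

lemma sum_eigenProj [CharZero k] (T : Module.End k V) {n : ℕ} (hn : n ≠ 0) {ζ : k}
    (hζ : IsPrimitiveRoot ζ n) : ∑ s ∈ Finset.range n, eigenProj T n (ζ ^ s) = 1 := by
  have hn' : (n : k) ≠ 0 := Nat.cast_ne_zero.2 hn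
  simp only [eigenProj]
  rw [← Finset.smul_sum, Finset.sum_comm, Finset.sum_eq_single_of_mem 0 (by simp; lia)]
  · simp [← Nat.cast_smul_eq_nsmul k, hn']
  · intro m hm hm0
    have h1 : ζ⁻¹ ^ m ≠ 1 := hζ.inv.pow_ne_one_of_pos_of_lt hm0 (Finset.mem_range.1 hm)
    rw [← Finset.sum_smul]
    have : ∑ s ∈ Finset.range n, (ζ ^ s)⁻¹ ^ m = ∑ s ∈ Finset.range n, (ζ⁻¹ ^ m) ^ s :=
      Finset.sum_congr rfl fun s _ ↦ by rw [← inv_pow, ← pow_mul, ← pow_mul, mul_comm]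
    rw [this, geom_sum_eq h1, ← pow_mul, mul_comm, pow_mul, hζ.inv.pow_eq_one]
    simp

lemma trace_pow_eq_sum_finrank_eigenspace [CharZero k] [FiniteDimensional k V]
    {T : Module.End k V} {n : ℕ} (hn : n ≠ 0) (hT : T ^ n = 1) {ζ : k}
    (hζ : IsPrimitiveRoot ζ n) (t : ℕ) :
    LinearMap.trace k V (T ^ t) =
      ∑ s ∈ Finset.range n, Module.finrank k (T.eigenspace (ζ ^ s)) * (ζ ^ t) ^ s := by
  have hproj (s : ℕ) := isProj_eigenProj hn hT
    (show (ζ ^ s) ^ n = 1 by rw [← pow_mul, mul_comm, pow_mul, hζ.pow_eq_one, one_pow])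
  have hmul (s : ℕ) : T ^ t * eigenProj T n (ζ ^ s) = (ζ ^ t) ^ s • eigenProj T n (ζ ^ s) := by
    have h : T * eigenProj T n (ζ ^ s) = ζ ^ s • eigenProj T n (ζ ^ s) :=
      LinearMap.ext fun x ↦ Module.End.mem_eigenspace_iff.1 ((hproj s).map_mem x)
    induction t with
    | zero => simp
    | succ t ih => rw [pow_succ, mul_assoc, h, mul_smul_comm, ih, smul_smul]; congr 1; ring
  rw [← mul_one (T ^ t), ← sum_eigenProj T hn hζ, Finset.mul_sum, map_sum]
  refine Finset.sum_congr rfl fun s _ ↦ ?_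
  rw [hmul, map_smul, (hproj s).trace, smul_eq_mul, mul_comm]

/-- If an operator of finite order `n` has trace zero, so have its powers prime to `n`. -/
lemma trace_pow_eq_zero_of_coprime [CharZero k] [FiniteDimensional k V]
    {T : Module.End k V} {n : ℕ} (hn : n ≠ 0) (hT : T ^ n = 1) {ζ : k}
    (hζ : IsPrimitiveRoot ζ n) (h0 : LinearMap.trace k V T = 0) {t : ℕ} (ht : t.Coprime n) :
    LinearMap.trace k V (T ^ t) = 0 := by
  let P : Polynomial ℤ := ∑ s ∈ Finset.range n,
    Polynomial.C (Module.finrank k (T.eigenspace (ζ ^ s)) : ℤ) * Polynomial.X ^ s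
  have hP (t : ℕ) : Polynomial.aeval (ζ ^ t) P = LinearMap.trace k V (T ^ t) := by
    simp [P, trace_pow_eq_sum_finrank_eigenspace hn hT hζ]
  have h1 : Polynomial.aeval ζ P = 0 := by simpa [h0] using hP 1
  obtain ⟨Q, hQ⟩ := minpoly.isIntegrallyClosed_dvd (hζ.isIntegral (Nat.pos_of_ne_zero hn)) h1
  rw [← hP, hQ, hζ.minpoly_eq_pow_coprime ht, map_mul, minpoly.aeval, zero_mul]

/-- If `A` and `B` are commuting operators with `A ^ (2 * n) = 1` and `B ^ n = 1`, for which only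
`A ^ n` contributes to the traces of the operators `A ^ m * B ^ b` with `m` odd, then the signed
dimensions of the joint eigenspaces do not depend on the eigenvalues. -/
lemma finrank_sub_finrank_eigenspace_inf [CharZero k] [FiniteDimensional k V]
    {A B : Module.End k V} (hAB : Commute A B) {n : ℕ} (hn : Odd n)
    (hA : A ^ (2 * n) = 1) (hB : B ^ n = 1)
    (h : ∀ m b : ℕ, Odd m → m < 2 * n → b < n → (m ≠ n ∨ b ≠ 0) →
      LinearMap.trace k V (A ^ m * B ^ b) = 0)
    {μ ν : k} (hμ : μ ^ n = 1) (hν : ν ^ n = 1) :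
    (Module.finrank k ↥(A.eigenspace μ ⊓ B.eigenspace ν) : k) -
      Module.finrank k ↥(A.eigenspace (-μ) ⊓ B.eigenspace ν) =
      (n : k)⁻¹ * (n : k)⁻¹ * LinearMap.trace k V (A ^ n) := by
  have hn0 : n ≠ 0 := hn.pos.ne'
  have h2n : 2 * n ≠ 0 := by lia
  have htrace {μ : k} (hμ : μ ^ (2 * n) = 1) :
      (Module.finrank k ↥(A.eigenspace μ ⊓ B.eigenspace ν) : k) =
        (n : k)⁻¹ * (2 * n : k)⁻¹ * ∑ m ∈ Finset.range (2 * n), ∑ b ∈ Finset.range n,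
          μ⁻¹ ^ m * ν⁻¹ ^ b * LinearMap.trace k V (A ^ m * B ^ b) := by
    have hcomm : Commute (eigenProj A (2 * n) μ) (eigenProj B n ν) :=
      (Commute.sum_left _ _ _ fun m _ ↦ (Commute.sum_right _ _ _ fun b _ ↦
        ((hAB.pow_pow m b).smul_left _).smul_right _).smul_right _).smul_left _
    rw [← (((isProj_eigenProj h2n hA hμ).mul_of_commute
      (isProj_eigenProj hn0 hB hν)) hcomm).trace]
    simp only [eigenProj, smul_mul_smul_comm, Finset.sum_mul_sum, map_smul, map_sum, smul_eq_mul]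
    push_cast
    ring
  have hμ2 : μ ^ (2 * n) = 1 := by rw [mul_comm, pow_mul, hμ, one_pow]
  rw [htrace hμ2, htrace (by rw [(even_two_mul n).neg_pow, hμ2]), ← mul_sub,
    ← Finset.sum_sub_distrib, Finset.sum_eq_single_of_mem n (by simp; lia)]
  · rw [← Finset.sum_sub_distrib, Finset.sum_eq_single_of_mem 0 (by simp; lia)]
    · have : (n : k) ≠ 0 := Nat.cast_ne_zero.2 hn0
      simp only [inv_pow, hn.neg_pow, hμ]
      simp
      field_simp
      ring
    · intro b hb hb0
      rw [h n b hn (by lia) (Finset.mem_range.1 hb) (.inr hb0)]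
      ring
  · intro m hm hmn
    rw [← Finset.sum_sub_distrib]
    refine Finset.sum_eq_zero fun b hb ↦ ?_
    rcases m.even_or_odd with hme | hmo
    · simp [hme.neg_pow]
    · rw [h m b hmo (Finset.mem_range.1 hm) (Finset.mem_range.1 hb) (.inl hmn)]
      ring

end RootsOfUnity

section Index

variable {k H : Type*} [Field k] [Ring H] [HopfAlgebra k H] {g : H}

lemma IsGroupLike.mul_antipode (hg : IsGroupLike k g) : g * antipode k g = 1 := by
  have hc : counit (R := k) g = 1 := by
    have h := congr(TensorProduct.lid k H $(rTensor_counit_comul (R := k) g))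
    rw [hg.2] at h
    exact smul_left_injective k hg.1 (by simpa using h)
  simpa [hg.2, hc] using mul_antipode_lTensor_comul_apply (R := k) g

lemma IsGroupLike.antipode_eq_pow (hg : IsGroupLike k g) {n : ℕ} (hn : n ≠ 0)
    (hgn : g ^ n = 1) : antipode k g = g ^ (n - 1) := by
  rw [← one_mul (antipode k g), ← hgn, ← pow_sub_one_mul hn, mul_assoc, hg.mul_antipode, mul_one]

lemma antipode_mul_mulRight (x : H) :
    (antipode k : Module.End k H) * LinearMap.mulRight k x =
      LinearMap.mulLeft k (antipode k x) * antipode k :=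
  LinearMap.ext fun y ↦ antipode_mul_antidistrib y x

lemma antipode_mul_mulLeft (x : H) :
    (antipode k : Module.End k H) * LinearMap.mulLeft k x =
      LinearMap.mulRight k (antipode k x) * antipode k :=
  LinearMap.ext fun y ↦ antipode_mul_antidistrib x y

lemma antipode_pow (x : H) (n : ℕ) : antipode k (x ^ n) = antipode k x ^ n := by
  induction n with
  | zero => simp
  | succ n ih => rw [pow_succ, antipode_mul_antidistrib, ih, pow_succ']

lemma commute_antipode_sq_mulRight_s9 (hg : IsGroupLike k g) {n : ℕ} (hn : n ≠ 0)
    (hgn : g ^ n = 1) :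
    Commute ((antipode k : Module.End k H) ^ 2) (LinearMap.mulRight k g) := by
  have hSS : antipode k (antipode k g) = g := by
    have h := congr(antipode k $(hg.mul_antipode))
    rw [antipode_mul_antidistrib, antipode_one] at h
    calc antipode k (antipode k g) = antipode k (antipode k g) * (antipode k g * g) := by
          rw [hg.antipode_eq_pow hn hgn, pow_sub_one_mul hn, hgn, mul_one]
      _ = g := by rw [← mul_assoc, h, one_mul]
  rw [commute_iff_eq, pow_two, mul_assoc, antipode_mul_mulRight, ← mul_assoc,
    antipode_mul_mulLeft, hSS, mul_assoc]

variable [CharZero k] [FiniteDimensional k H] {p : ℕ}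

/-- The traces of `S ^ (2 * m)` composed with right multiplication by `g ^ b`, for `m` odd and
prime to `p`, vanish. -/
lemma trace_antipode_sq_pow_mul_mulRight_pow_of_coprime (hp : p.Prime) (hpodd : Odd p)
    (hcomm : Commute ((antipode k : Module.End k H) ^ 2) (LinearMap.mulRight k g))
    (hS : ((antipode k : Module.End k H) ^ 2) ^ (2 * p) = 1) (hgp : g ^ p = 1)
    (htr : ∀ b, LinearMap.trace k H
      (LinearMap.mulRight k (g ^ b) * (antipode k : Module.End k H) ^ 2) = 0)
    {ω : k} (hω : IsPrimitiveRoot ω p) {m : ℕ} (hm : Odd m) (hmp : m.Coprime p) (b : ℕ) :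
    LinearMap.trace k H
      (((antipode k : Module.End k H) ^ 2) ^ m * LinearMap.mulRight k g ^ b) = 0 := by
  have hR : LinearMap.mulRight k g ^ p = 1 := by
    rw [LinearMap.pow_mulRight, hgp, LinearMap.mulRight_one]; rfl
  obtain ⟨c, hc⟩ : ∃ c : ℕ, c * m ≡ b [MOD p] := by
    obtain ⟨y, hy⟩ := Nat.exists_mul_mod_eq_one_of_coprime hmp hp.one_lt
    refine ⟨b * y, ?_⟩
    have : m * y ≡ 1 [MOD p] := by rw [Nat.ModEq, hy.2, Nat.mod_eq_of_lt hp.one_lt]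
    simpa [mul_assoc, mul_comm y] using this.mul_left b
  have hRb : LinearMap.mulRight k g ^ b = LinearMap.mulRight k g ^ (c * m) :=
    pow_eq_pow_of_modEq hc.symm hR
  have h2 : IsPrimitiveRoot (-ω) (2 * p) := by
    have h1 : IsPrimitiveRoot (-1 : k) 2 := IsPrimitiveRoot.neg_one 0 (by simp)
    have h := (Commute.all (-1 : k) ω).orderOf_mul_eq_mul_orderOf_of_coprime
    rw [← h1.eq_orderOf, ← hω.eq_orderOf] at h
    rw [← neg_one_mul, ← h (Nat.coprime_two_left.2 hpodd)]
    exact IsPrimitiveRoot.orderOf _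
  have hU := trace_pow_eq_zero_of_coprime (by have := hp.pos; lia)
    (T := (antipode k : Module.End k H) ^ 2 * LinearMap.mulRight k g ^ c) (n := 2 * p)
    (by rw [(hcomm.pow_right c).mul_pow, hS, one_mul, ← pow_mul, ← mul_assoc, pow_mul', hR,
      one_pow])
    h2 (by rw [(hcomm.pow_right c).eq, LinearMap.pow_mulRight, htr])
    (Nat.Coprime.mul_right (Nat.coprime_two_right.2 hm) hmp)
  rwa [(hcomm.pow_right c).mul_pow, ← pow_mul (LinearMap.mulRight k g), ← hRb] at hU

lemma trace_antipode_sq_pow_mul_mulRight_pow (hp : p.Prime) (hpodd : Odd p)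
    (hg : IsGroupLike k g)
    (hS : (antipode k : Module.End k H) ^ (4 * p) = 1) (hgp : g ^ p = 1)
    (htr : ∀ b, LinearMap.trace k H
      (LinearMap.mulRight k (g ^ b) * (antipode k : Module.End k H) ^ 2) = 0)
    (hS4 : ∀ b, ((antipode k : Module.End k H) ^ 4) b * g = g * b)
    {ω : k} (hω : IsPrimitiveRoot ω p) {m b : ℕ} (hm : Odd m) (hb : ¬ p ∣ b ∨ ¬ p ∣ m) :
    LinearMap.trace k H
      (((antipode k : Module.End k H) ^ 2) ^ m * LinearMap.mulRight k g ^ b) = 0 := by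
  have hcomm := commute_antipode_sq_mulRight_s9 hg hp.ne_zero hgp
  have hS2 : ((antipode k : Module.End k H) ^ 2) ^ (2 * p) = 1 := by
    rw [← pow_mul, ← hS]; congr 1; ring
  have hcop {m : ℕ} (hm : Odd m) (hmp : ¬ p ∣ m) (b : ℕ) :=
    trace_antipode_sq_pow_mul_mulRight_pow_of_coprime hp hpodd hcomm hS2 hgp htr hω hm
      ((hp.coprime_iff_not_dvd.2 hmp).symm) b
  by_cases hmp : p ∣ m
  swap
  · exact hcop hm hmp b
  have hpb : ¬ p ∣ b := hb.resolve_right (not_not.2 hmp)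
  obtain ⟨u, hu⟩ : IsUnit (antipode k : Module.End k H) :=
    IsUnit.of_pow_eq_one hS (by have := hp.pos; lia)
  have hleft : LinearMap.mulLeft k g =
      ((antipode k : Module.End k H) ^ 2) ^ 2 * LinearMap.mulRight k g := by
    rw [(hcomm.pow_left 2).eq, ← pow_mul]
    exact LinearMap.ext fun x ↦ (hS4 x).symm
  have hconj : (antipode k : Module.End k H) *
      (((antipode k : Module.End k H) ^ 2) ^ m * LinearMap.mulRight k g ^ b) =
      ((antipode k : Module.End k H) ^ 2) ^ m * LinearMap.mulLeft k g ^ ((p - 1) * b) *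
        antipode k := by
    rw [LinearMap.pow_mulRight, LinearMap.pow_mulLeft, ← mul_assoc,
      (((Commute.refl (antipode k : Module.End k H)).pow_right 2).pow_right m).eq, mul_assoc,
      mul_assoc, antipode_mul_mulRight, pow_mul, ← hg.antipode_eq_pow hp.ne_zero hgp,
      antipode_pow]
  have htrace := LinearMap.trace_mul_comm k ((u⁻¹ : (Module.End k H)ˣ) : Module.End k H)
    ((antipode k : Module.End k H) *
      (((antipode k : Module.End k H) ^ 2) ^ m * LinearMap.mulRight k g ^ b))
  rw [← mul_assoc, ← hu, Units.inv_mul, one_mul, hu, hconj, ← hu, Units.mul_inv_cancel_right,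
    hu] at htrace
  rw [htrace, hleft, (hcomm.pow_left 2).mul_pow, ← pow_mul _ 2 ((p - 1) * b), ← mul_assoc,
    ← pow_add]
  have hp1 : ¬ p ∣ p - 1 := fun h ↦
    absurd (Nat.le_of_dvd (by have := hp.two_le; lia) h) (by have := hp.pos; lia)
  refine hcop (hm.add_even (even_two_mul _)) (fun h ↦ ?_) _
  rw [Nat.dvd_add_right hmp, hp.dvd_mul, hp.dvd_mul] at h
  have h2 : ¬ p ∣ 2 := fun h ↦ by
    rw [Nat.prime_dvd_prime_iff_eq hp Nat.prime_two] at h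
    subst h
    exact absurd hpodd (by decide)
  tauto

end Index

/-- Lemma 5.7(i). Let `p` be an odd prime, `H` a Hopf algebra of index `p`
over an algebraically closed field of characteristic `0` such that `H` is unimodular (the
distinguished group-like element of `H*` is the counit) and `H*` is not unimodular (the
distinguished group-like element `g` of `H` is `≠ 1`), and `ω` a primitive `p`-th root of
unity. Then there is a single integer `d` with
`dim H^ω_{0,i,j} − dim H^ω_{1,i,j} = d` for all `i, j ∈ ℤ/p`. -/
theorem stmt9 (k : Type*) [Field k] [IsAlgClosed k] [CharZero k]
    (p : ℕ) (hp : p.Prime) (hpodd : Odd p)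
    (H : Type*) [Ring H] [HopfAlgebra k H] [FiniteDimensional k H]
    (g : H) (hg : IsDistinguishedGroupLike k g) (hg1 : g ≠ 1) (hidx : IsHopfIndex k g p)
    (huni : IsDistinguishedGroupLikeDual k (Bialgebra.counitAlgHom k H))
    (ω : k) (hω : IsPrimitiveRoot ω p) :
    ∃ d : ℤ, ∀ i j : ZMod p,
      (Module.finrank k (hopfEigenspace g ω ((0 : ZMod 2), i, j)) : ℤ) -
        (Module.finrank k (hopfEigenspace g ω ((1 : ZMod 2), i, j)) : ℤ) = d := by
  obtain ⟨hgl, l, hl0, hl, hlg⟩ := hg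
  obtain ⟨L, hL0, hL, hL'⟩ := huni
  obtain ⟨-, hS, hgp, -⟩ := hidx
  replace hL' : IsRightIntegral k L := hL'
  have hSu : IsUnit (HopfAlgebra.antipode k : Module.End k H) :=
    IsUnit.of_pow_eq_one hS (by have := hp.pos; lia)
  have hSb := (Module.End.isUnit_iff _).1 hSu
  have hlL := apply_integral_ne_zero hSb hl hl0 hL hL0
  have hS4 := antipode_pow_four_mul_eq hSb hl hlg hgl.mul_antipode
    (IsUnit.of_pow_eq_one hgp hp.ne_zero) hL hL' hlL
  have htr (b : ℕ) : LinearMap.trace k H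
      (LinearMap.mulRight k (g ^ b) * (HopfAlgebra.antipode k : Module.End k H) ^ 2) = 0 := by
    have hgb : Coalgebra.comul (R := k) (g ^ b) = (g ^ b) ⊗ₜ[k] (g ^ b) := by
      rw [Bialgebra.comul_pow, hgl.2, Algebra.TensorProduct.tmul_pow]
    have h := apply_integral_mul_trace_mulRight_comp_antipode_sq hl hL' (g ^ b)
    rw [apply_eq_zero_of_comul_eq hl hlg hg1 hgb, mul_zero] at h
    exact (mul_eq_zero.1 h).resolve_left hlL
  have hω1 (i : ZMod p) : (ω ^ i.val) ^ p = 1 := by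
    rw [← pow_mul, mul_comm, pow_mul, hω.pow_eq_one, one_pow]
  have key (i j : ZMod p) := finrank_sub_finrank_eigenspace_inf
    (commute_antipode_sq_mulRight_s9 hgl hp.ne_zero hgp) hpodd
    (by rw [← pow_mul, ← hS]; congr 1; ring)
    (by rw [LinearMap.pow_mulRight, hgp, LinearMap.mulRight_one]; rfl)
    (fun m b hm hm2 hb h ↦ trace_antipode_sq_pow_mul_mulRight_pow hp hpodd hgl hS hgp htr hS4 hω
      hm (h.symm.imp (fun hb0 hd ↦ absurd (Nat.le_of_dvd (by lia) hd) (by lia)) fun hmp hd ↦ by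
        obtain ⟨c, rfl⟩ := hd
        have hc : c < 2 := by
          by_contra! h2
          nlinarith
        interval_cases c <;> simp_all))
    (hω1 i) (hω1 j)
  have hE₀ (i j : ZMod p) : hopfEigenspace (k := k) g ω ((0 : ZMod 2), i, j) =
      Module.End.eigenspace ((HopfAlgebra.antipode k : Module.End k H) ^ 2) (ω ^ i.val) ⊓
        Module.End.eigenspace (LinearMap.mulRight k g) (ω ^ j.val) := by
    simp [hopfEigenspace]
  have hE₁ (i j : ZMod p) : hopfEigenspace (k := k) g ω ((1 : ZMod 2), i, j) =
      Module.End.eigenspace ((HopfAlgebra.antipode k : Module.End k H) ^ 2) (-ω ^ i.val) ⊓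
        Module.End.eigenspace (LinearMap.mulRight k g) (ω ^ j.val) := by
    simp [hopfEigenspace, ZMod.val_one]
  refine ⟨(Module.finrank k (hopfEigenspace (k := k) g ω ((0 : ZMod 2), (0 : ZMod p), 0)) : ℤ) -
    Module.finrank k (hopfEigenspace (k := k) g ω ((1 : ZMod 2), (0 : ZMod p), 0)),
    fun i j ↦ Int.cast_injective (α := k) ?_⟩
  rw [hE₀, hE₀, hE₁, hE₁]
  push_cast
  exact (key i j).trans (key 0 0).symm
end

section
/- Let H be a Hopf algebra over k of odd index n, ω ∈ k a primitive n-th root of unity, g and α the distinguished group-like elements of H and H* respectively, and x an integer with α(g) = ω^x. Let Λ be a left integral of H and λ a right integral of H* with λ(Λ) = 1, and for b ∈ Z_2 × Z_n × Z_n let E^ω_b : H → H be the projection onto H^ω_b determined by the decomposition H = ⊕_b H^ω_b. Then for every b ∈ Z_2 × Z_n × Z_n, the dimension of H^ω_b equals λ(Σ S(E^ω_{−b+(0,−x,x)}(Λ₍₂₎)) · E^ω_b(Λ₍₁₎)), where Δ(Λ) = Σ Λ₍₁₎ ⊗ Λ₍₂₎ in Sweedler notation and addition of triples is in Z_2 ×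 Z_n × Z_n. -/
open scoped TensorProduct

open Coalgebra HopfAlgebra

section HopfIntegral

variable {k H : Type*} [Field k] [Ring H] [HopfAlgebra k H]

theorem sum_antipode_tmul_one_mul_comul {ι : Type*} {b : H} (r : Repr k b ι) :
    ∑ i ∈ r.index, (antipode k (r.left i) ⊗ₜ[k] (1 : H)) * comul (r.right i) = 1 ⊗ₜ[k] b := by
  have h := congrArg
    (LinearMap.rTensor H (LinearMap.mul' k H ∘ₗ LinearMap.rTensor H (antipode k)) ∘ₗ
      (TensorProduct.assoc k H H H).symm.toLinearMap)
    (sum_tmul_tmul_eq r (fun i => ℛ k (r.left i)) (fun i => ℛ k (r.right i)))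
  simp only [map_sum, LinearMap.comp_apply, LinearEquiv.coe_coe, TensorProduct.assoc_symm_tmul,
    LinearMap.rTensor_tmul, LinearMap.mul'_apply] at h
  simp only [← TensorProduct.sum_tmul, sum_antipode_mul_eq_smul] at h
  have h2 : ∀ i, (antipode k (r.left i) ⊗ₜ[k] (1 : H)) * comul (r.right i) =
      ∑ j ∈ (ℛ k (r.right i)).index,
        (antipode k (r.left i) * (ℛ k (r.right i)).left j) ⊗ₜ[k] (ℛ k (r.right i)).right j := by
    intro i
    conv_lhs => rw [← (ℛ k (r.right i)).eq]
    simp [Finset.mul_sum]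
  simp only [h2, ← h, TensorProduct.smul_tmul, ← TensorProduct.tmul_sum, sum_counit_smul]

theorem comul_antipode (a : H) :
    comul (R := k) (antipode k a) =
      TensorProduct.map (antipode k) (antipode k) (TensorProduct.comm k H H (comul a)) := by
  have key := left_inv_eq_right_inv (a := WithConv.toConv (comul (R := k) (A := H)))
    (b := WithConv.toConv (TensorProduct.map (antipode k) (antipode k) ∘ₗ
      (TensorProduct.comm k H H).toLinearMap ∘ₗ comul)) ?_ LinearMap.comul_right_inv
  · exact (congrArg (fun f => f.ofConv a) key).symm
  · ext b
    rw [(ℛ k b).convMul_apply]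
    have h := congrArg
      (LinearMap.mul' k (H ⊗[k] H) ∘ₗ TensorProduct.map
        (TensorProduct.map (antipode k) (antipode k) ∘ₗ (TensorProduct.comm k H H).toLinearMap)
        comul ∘ₗ (TensorProduct.assoc k H H H).symm.toLinearMap)
      (sum_tmul_tmul_eq (ℛ k b) (fun i => ℛ k ((ℛ k b).left i)) (fun i => ℛ k ((ℛ k b).right i)))
    simp only [map_sum, LinearMap.comp_apply, LinearEquiv.coe_coe, TensorProduct.assoc_symm_tmul,
      TensorProduct.map_tmul, LinearMap.mul'_apply, TensorProduct.comm_tmul] at h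
    have h1 : ∀ i, TensorProduct.map (antipode k) (antipode k)
        (TensorProduct.comm k H H (comul ((ℛ k b).left i))) * comul (R := k) ((ℛ k b).right i) =
        ∑ j ∈ (ℛ k ((ℛ k b).left i)).index,
          (antipode k ((ℛ k ((ℛ k b).left i)).right j) ⊗ₜ[k]
            antipode k ((ℛ k ((ℛ k b).left i)).left j)) * comul (R := k) ((ℛ k b).right i) := by
      intro i
      conv_lhs => rw [← (ℛ k ((ℛ k b).left i)).eq]
      simp [Finset.sum_mul]
    have h2 : ∀ x y : H, antipode k x ⊗ₜ[k] antipode k y =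
        ((1 : H) ⊗ₜ[k] antipode k y) * (antipode k x ⊗ₜ[k] (1 : H)) := by simp
    simp only [LinearMap.comp_apply, LinearEquiv.coe_coe, h1]
    rw [h]
    simp only [h2, mul_assoc, ← Finset.mul_sum, sum_antipode_tmul_one_mul_comul]
    simp only [Algebra.TensorProduct.tmul_mul_tmul, mul_one, ← TensorProduct.tmul_sum,
      sum_antipode_mul_eq_smul, LinearMap.convOne_apply, TensorProduct.tmul_smul,
      Algebra.algebraMap_eq_smul_one, Algebra.TensorProduct.one_def]

theorem comul_antipode_sq (a : H) :
    comul (R := k) (((antipode k : Module.End k H) ^ 2) a) =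
      TensorProduct.map ((antipode k : Module.End k H) ^ 2) ((antipode k : Module.End k H) ^ 2)
        (comul a) := by
  have h : ∀ y : H ⊗[k] H, TensorProduct.map (antipode k) (antipode k) (TensorProduct.comm k H H
      (TensorProduct.map (antipode k) (antipode k) (TensorProduct.comm k H H y))) =
      TensorProduct.map ((antipode k : Module.End k H) ^ 2) ((antipode k : Module.End k H) ^ 2)
        y := by
    intro y
    induction y with
    | zero => simp
    | tmul u v => simp [pow_two]
    | add u v hu hv => simp only [map_add, hu, hv]
  rw [← h, ← comul_antipode, ← comul_antipode, pow_two, Module.End.mul_apply]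

theorem sum_counit_right_smul {ι : Type*} {a : H} (r : Repr k a ι) :
    ∑ i ∈ r.index, counit (R := k) (r.right i) • r.left i = a := by
  have h := congrArg (TensorProduct.rid k H) (sum_tmul_counit_eq r)
  simpa only [map_sum, TensorProduct.rid_tmul, one_smul] using h

theorem IsLeftIntegral.antipode_tmul_one_mul_comul {L : H} (hL : IsLeftIntegral k L) (a : H) :
    (antipode k a ⊗ₜ[k] (1 : H)) * comul (R := k) L = ((1 : H) ⊗ₜ[k] a) * comul L := by
  rw [← sum_antipode_tmul_one_mul_comul (ℛ k a), Finset.sum_mul]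
  simp only [mul_assoc, ← Bialgebra.comul_mul, hL _, map_smul, mul_smul_comm]
  conv_lhs => rw [← sum_counit_right_smul (ℛ k a)]
  simp only [map_sum, map_smul, TensorProduct.sum_tmul, Finset.sum_mul, ← TensorProduct.smul_tmul',
    smul_mul_assoc]

theorem IsRightIntegralDual.sum_smul {l : Module.Dual k H} (hl : IsRightIntegralDual k l)
    {ι : Type*} {a : H} (r : Repr k a ι) :
    ∑ i ∈ r.index, l (r.left i) • r.right i = l a • 1 := by
  rw [← sub_eq_zero, ← Module.forall_dual_apply_eq_zero_iff k]
  intro f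
  have h := LinearMap.congr_fun (hl f) a
  simp only [conv, LinearMap.comp_apply, ← r.eq, map_sum, TensorProduct.map_tmul,
    LinearMap.mul'_apply, LinearMap.smul_apply, smul_eq_mul] at h
  simp [h, mul_comm]

theorem isRightIntegralDual_of_sum_smul {l : Module.Dual k H}
    (hl : ∀ a : H, ∑ i ∈ (ℛ k a).index, l ((ℛ k a).left i) • (ℛ k a).right i = l a • 1) :
    IsRightIntegralDual k l := by
  intro f
  ext a
  have h := congrArg f (hl a)
  conv_lhs => rw [conv, LinearMap.comp_apply, LinearMap.comp_apply, ← (ℛ k a).eq]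
  simpa [mul_comm] using h

/-- The representation of `Δ (S a)` obtained from one of `Δ a`. -/
noncomputable def reprAntipode {ι : Type*} {a : H} (r : Repr k a ι) : Repr k (antipode k a) ι where
  left i := antipode k (r.right i)
  right i := antipode k (r.left i)
  index := r.index
  eq := by simp [comul_antipode, ← r.eq]

theorem IsRightIntegralDual.sum_antipode_smul {l : Module.Dual k H} (hl : IsRightIntegralDual k l)
    (hS : Function.Injective (antipode k (A := H))) {ι : Type*} {a : H} (r : Repr k a ι) :
    ∑ i ∈ r.index, l (antipode k (r.right i)) • r.left i = l (antipode k a) • 1 := by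
  apply hS
  simpa [reprAntipode] using hl.sum_smul (reprAntipode r)

section DualBasis

variable {l : Module.Dual k H} {L : H}

theorem IsLeftIntegral.sum_dual_smul (hL : IsLeftIntegral k L) (hl : IsRightIntegralDual k l)
    (hS : Function.Bijective (antipode k (A := H))) {ι : Type*} (r : Repr k L ι) (h : H) :
    ∑ i ∈ r.index, l (antipode k (r.right i) * h) • r.left i = l (antipode k L) • h := by
  obtain ⟨a, rfl⟩ := hS.2 h
  have e := congrArg ((TensorProduct.rid k H).toLinearMap ∘ₗ LinearMap.lTensor H (l ∘ₗ antipode k))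
    (hL.antipode_tmul_one_mul_comul a)
  simp only [← r.eq, Finset.mul_sum, Algebra.TensorProduct.tmul_mul_tmul, map_sum, one_mul,
    LinearMap.comp_apply, LinearMap.lTensor_tmul, LinearEquiv.coe_coe,
    TensorProduct.rid_tmul] at e
  simp only [← antipode_mul_antidistrib, ← e, ← mul_smul_comm, ← Finset.mul_sum,
    hl.sum_antipode_smul hS.1]
  rw [mul_smul_comm, mul_one]

theorem IsLeftIntegral.smul_eq (hL : IsLeftIntegral k L) (hl : IsRightIntegralDual k l)
    (hS : Function.Bijective (antipode k (A := H))) {M : H} (hM : IsLeftIntegral k M) :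
    l M • L = l (antipode k L) • M := by
  rw [← hL.sum_dual_smul hl hS (ℛ k L)]
  simp only [hM _, map_smul, counit_antipode, smul_eq_mul, mul_comm _ (l M), mul_smul]
  rw [← Finset.smul_sum, sum_counit_right_smul]

theorem IsLeftIntegral.apply_antipode (hL : IsLeftIntegral k L) (hL0 : L ≠ 0)
    (hl : IsRightIntegralDual k l) (hS : Function.Bijective (antipode k (A := H))) :
    l (antipode k L) = l L :=
  (smul_left_injective k hL0 (hL.smul_eq hl hS hL)).symm

theorem IsRightIntegralDual.eq_smul (hL : IsLeftIntegral k L) (hl : IsRightIntegralDual k l)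
    (hS : Function.Bijective (antipode k (A := H))) (h1 : l L = 1) {m : Module.Dual k H}
    (hm : IsRightIntegralDual k m) : m = m L • l := by
  have hL0 : L ≠ 0 := by rintro rfl; simp at h1
  ext h
  have e := congrArg m (hL.sum_dual_smul hl hS (ℛ k L) h)
  rw [hL.apply_antipode hL0 hl hS, h1, one_smul] at e
  simp only [map_sum, map_smul, smul_eq_mul] at e
  have e2 := congrArg (fun y => l (antipode k y * h)) (hm.sum_smul (ℛ k L))
  simp only [map_sum, map_smul, antipode_one, smul_mul_assoc, Finset.sum_mul, one_mul,
    smul_eq_mul] at e2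
  rw [← e, LinearMap.smul_apply, smul_eq_mul, ← e2]
  exact Finset.sum_congr rfl fun i _ => mul_comm _ _

theorem IsLeftIntegral.trace_eq [FiniteDimensional k H] (hL : IsLeftIntegral k L)
    (hl : IsRightIntegralDual k l) (hS : Function.Bijective (antipode k (A := H)))
    (h1 : l L = 1) (f : Module.End k H) {ι : Type*} (r : Repr k L ι) :
    LinearMap.trace k H f = ∑ i ∈ r.index, l (antipode k (r.right i) * f (r.left i)) := by
  have hL0 : L ≠ 0 := by rintro rfl; simp at h1
  have e : f = dualTensorHom k H H (∑ i ∈ r.index,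
      (l ∘ₗ LinearMap.mulLeft k (antipode k (r.right i))) ⊗ₜ[k] f (r.left i)) := by
    ext h
    have e := congrArg f (hL.sum_dual_smul hl hS r h)
    rw [hL.apply_antipode hL0 hl hS, h1, one_smul] at e
    simp [← e, LinearMap.sum_apply]
  conv_lhs => rw [e, LinearMap.trace_eq_contract_apply]
  simp

theorem IsLeftIntegral.antipode_sq (hL : IsLeftIntegral k L)
    (hS : Function.Bijective (antipode k (A := H))) :
    IsLeftIntegral k (((antipode k : Module.End k H) ^ 2) L) := by
  intro a
  obtain ⟨b, rfl⟩ := hS.2 a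
  obtain ⟨c, rfl⟩ := hS.2 b
  simp only [pow_two, Module.End.mul_apply, ← antipode_mul_antidistrib, hL c, map_smul,
    counit_antipode]

end DualBasis

section Distinguished

variable {l : Module.Dual k H} {L g : H}

theorem sum_smul_left_eq_smul_of_conv (hg : ∀ f : Module.Dual k H, conv f l = f g • l)
    {ι : Type*} {a : H} (r : Repr k a ι) :
    ∑ i ∈ r.index, l (r.right i) • r.left i = l a • g := by
  rw [← sub_eq_zero, ← Module.forall_dual_apply_eq_zero_iff k]
  intro f
  have h := LinearMap.congr_fun (hg f) a
  simp only [conv, LinearMap.comp_apply, ← r.eq, map_sum, TensorProduct.map_tmul,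
    LinearMap.mul'_apply, LinearMap.smul_apply, smul_eq_mul] at h
  simp only [map_sub, map_sum, map_smul, smul_eq_mul, mul_comm (l _), h, sub_self]

/-- The representation of `Δ (a * g)` obtained from one of `Δ a`, for `g` group-like. -/
noncomputable def reprMulGroupLike (hg : IsGroupLike k g) {ι : Type*} {a : H} (r : Repr k a ι) :
    Repr k (a * g) ι where
  left i := r.left i * g
  right i := r.right i * g
  index := r.index
  eq := by simp [hg.2, ← r.eq, Finset.sum_mul]

theorem IsGroupLike.isGroupLikeElem_s12 (hg : IsGroupLike k g) : IsGroupLikeElem k g where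
  counit_eq_one := by
    have h := congrArg (TensorProduct.lid k H) (rTensor_counit_comul (R := k) g)
    rw [hg.2] at h
    simp only [LinearMap.rTensor_tmul, TensorProduct.lid_tmul, one_smul] at h
    exact smul_left_injective k hg.1 (by simpa using h)
  comul_eq_tmul_self := hg.2

theorem isRightIntegralDual_mulRight_comp_antipode (hg : IsGroupLike k g)
    (hlg : ∀ f : Module.Dual k H, conv f l = f g • l)
    (hS : Function.Injective (antipode k (A := H))) :
    IsRightIntegralDual k (l ∘ₗ LinearMap.mulRight k g ∘ₗ antipode k) := by
  apply isRightIntegralDual_of_sum_smul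
  intro a
  apply hS
  have h := sum_smul_left_eq_smul_of_conv hlg (reprMulGroupLike hg (reprAntipode (ℛ k a)))
  have h2 := congrArg (· * antipode k g) h
  simpa [reprMulGroupLike, reprAntipode, Finset.sum_mul, mul_assoc,
    hg.isGroupLikeElem_s12.mul_antipode_cancel] using h2

theorem IsRightIntegralDual.apply_antipode_mul (hL : IsLeftIntegral k L)
    (hl : IsRightIntegralDual k l) (hS : Function.Bijective (antipode k (A := H)))
    (h1 : l L = 1) (hg : IsGroupLike k g)
    (hlg : ∀ f : Module.Dual k H, conv f l = f g • l) (h : H) :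
    l (antipode k h * g) = l h := by
  have hL0 : L ≠ 0 := by rintro rfl; simp at h1
  have e := hl.eq_smul hL hS h1 (isRightIntegralDual_mulRight_comp_antipode hg hlg hS.1)
  have hgL : antipode k L * g = antipode k L := by
    rw [← hg.isGroupLikeElem_s12.antipode_antipode, ← antipode_mul_antidistrib, hL]
    simp [hg.isGroupLikeElem_s12.counit_eq_one]
  have e2 := LinearMap.congr_fun e h
  simpa [hgL, hL.apply_antipode hL0 hl hS, h1] using e2

theorem IsLeftIntegral.antipode_sq_eq (hL : IsLeftIntegral k L)
    (hl : IsRightIntegralDual k l) (hS : Function.Bijective (antipode k (A := H)))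
    (h1 : l L = 1) (hg : IsGroupLike k g)
    (hlg : ∀ f : Module.Dual k H, conv f l = f g • l) {c : k} (hc : L * g = c • L) :
    c • ((antipode k : Module.End k H) ^ 2) L = L := by
  have hL0 : L ≠ 0 := by rintro rfl; simp at h1
  have hLS := hL.apply_antipode hL0 hl hS
  have e := hL.smul_eq hl hS (hL.antipode_sq hS)
  rw [hLS, h1, one_smul] at e
  have e2 := hl.apply_antipode_mul hL hS h1 hg hlg (antipode k L)
  rw [hLS, h1] at e2
  have e3 : antipode k (antipode k L) = ((antipode k : Module.End k H) ^ 2) L := by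
    rw [pow_two, Module.End.mul_apply]
  rw [e3, ← e, smul_mul_assoc, hc, map_smul, map_smul, h1] at e2
  rw [← e, smul_smul]
  simp only [smul_eq_mul, mul_one] at e2
  rw [mul_comm, e2, one_smul]

end Distinguished

end HopfIntegral

theorem apply_comp_of_eigenvector_family {k V ι : Type*} [CommRing k] [AddCommGroup V] [Module k V]
    [Fintype ι] {E : ι → Module.End k V} (hidem : ∀ t, E t * E t = E t)
    (horth : ∀ t t', t ≠ t' → E t * E t' = 0) (hsum : ∑ t, E t = 1) {T : Module.End k V}
    {c : ι → k} (hT : ∀ t u, T (E t u) = c t • E t u) (t : ι) :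
    E t ∘ₗ T = c t • E t := by
  ext u
  have hu : u = ∑ s, E s u := by
    rw [← LinearMap.sum_apply, hsum, Module.End.one_apply]
  conv_lhs => rw [hu]
  simp only [LinearMap.comp_apply, map_sum, hT, map_smul]
  rw [Finset.sum_eq_single t]
  · rw [← Module.End.mul_apply, hidem, LinearMap.smul_apply]
  · intro s _ hs
    rw [← Module.End.mul_apply, horth t s hs.symm, LinearMap.zero_apply, smul_zero]
  · simp

theorem IsPrimitiveRoot.intCast_zmod_eq_zero {k : Type*} [Field k] {ω : k} {n : ℕ}
    (hω : IsPrimitiveRoot ω n) {m : ℤ} (h : ω ^ m = 1) : (m : ZMod n) = 0 :=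
  (ZMod.intCast_zmod_eq_zero_iff_dvd m n).2 ((hω.zpow_eq_one_iff_dvd m).1 h)

theorem eq_neg_add_of_weights {k : Type*} [Field k] [CharZero k] {n : ℕ} (hn : Odd n) [NeZero n]
    {ω : k} (hω : IsPrimitiveRoot ω n) {x : ℤ} {b t : ZMod 2 × ZMod n × ZMod n}
    (h₁ : ω ^ x * (((-1) ^ b.1.val * ω ^ b.2.1.val) * ((-1) ^ t.1.val * ω ^ t.2.1.val)) = 1)
    (h₂ : ω ^ b.2.2.val * ω ^ t.2.2.val = ω ^ x) :
    t = -b + ((0 : ZMod 2), ((-x : ℤ) : ZMod n), ((x : ℤ) : ZMod n)) := by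
  have hω0 : ω ≠ 0 := hω.ne_zero (NeZero.ne n)
  have hsign : (-1 : k) ^ (b.1.val + t.1.val) * ω ^ (x + b.2.1.val + t.2.1.val : ℤ) = 1 := by
    rw [zpow_add₀ hω0, zpow_add₀ hω0, zpow_natCast, zpow_natCast, pow_add]
    linear_combination h₁
  have heven : Even (b.1.val + t.1.val) := by
    by_contra hodd
    rw [Nat.not_even_iff_odd] at hodd
    rw [hodd.neg_one_pow] at hsign
    have h := congrArg (· ^ n) hsign
    simp only [mul_pow, hn.neg_one_pow, one_pow] at h
    rw [← zpow_natCast, zpow_comm, zpow_natCast, hω.pow_eq_one, one_zpow] at h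
    norm_num at h
  rw [heven.neg_one_pow, one_mul] at hsign
  have h0 : ((b.1.val + t.1.val : ℕ) : ZMod 2) = 0 :=
    (ZMod.natCast_eq_zero_iff_even).2 heven
  have hi := hω.intCast_zmod_eq_zero hsign
  have hj := hω.intCast_zmod_eq_zero (m := b.2.2.val + t.2.2.val - x) (by
    rw [zpow_sub₀ hω0, zpow_add₀ hω0, zpow_natCast, zpow_natCast, h₂, div_self]
    exact zpow_ne_zero _ hω0)
  push_cast at h0 hi hj
  simp only [ZMod.natCast_val, ZMod.cast_id', id] at h0 hi hj
  refine Prod.ext ?_ (Prod.ext ?_ ?_)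
  · simpa using eq_neg_of_add_eq_zero_right h0
  · simp only [Prod.snd_add, Prod.fst_add, Prod.snd_neg, Prod.fst_neg, Int.cast_neg]
    linear_combination hi
  · simp only [Prod.snd_add, Prod.snd_neg]
    linear_combination hj

/-- Lemma 4.2. Let `H` be a Hopf algebra of odd index `n` over an
algebraically closed field of characteristic `0`, `ω` a primitive `n`-th root of unity,
`g`, `α` the distinguished group-like elements of `H`, `H*`, and `x` an integer with
`α(g) = ω^x`. Let `Λ` be a left integral of `H` and `lam` a right integral of `H*` with
`lam Λ = 1`, and let `E_𝐛` be the family of projections onto the summands of the eigenspace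
decomposition `H = ⊕_𝐛 H^ω_𝐛`. Then for every `𝐛`,
`dim H^ω_𝐛 = lam (Σ S(E_{−𝐛+(0,−x,x)}(Λ₂)) * E_𝐛(Λ₁))`, the inner expression being the image
of `Δ(Λ) = Σ Λ₁ ⊗ Λ₂` under the map `h₁ ⊗ h₂ ↦ S(E_{−𝐛+(0,−x,x)}(h₂)) * E_𝐛(h₁)`. -/
theorem stmt12 (k : Type*) [Field k] [IsAlgClosed k] [CharZero k]
    (n : ℕ) (hn : Odd n) [NeZero n]
    (H : Type*) [Ring H] [HopfAlgebra k H] [FiniteDimensional k H]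
    (g : H) (hg : IsDistinguishedGroupLike k g) (hidx : IsHopfIndex k g n)
    (α : H →ₐ[k] k) (hα : IsDistinguishedGroupLikeDual k α)
    (ω : k) (hω : IsPrimitiveRoot ω n)
    (x : ℤ) (hx : α g = ω ^ x)
    (Λ : H) (hΛ : IsLeftIntegral k Λ)
    (lam : Module.Dual k H) (hlam : IsRightIntegralDual k lam) (hpair : lam Λ = 1)
    (E : (ZMod 2 × ZMod n × ZMod n) → Module.End k H)
    (hEmem : ∀ t u, E t u ∈ hopfEigenspace g ω t)
    (hEid : ∀ t, ∀ u ∈ hopfEigenspace g ω t, E t u = u)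
    (hEorth : ∀ t t', t ≠ t' → E t * E t' = 0)
    (hEsum : ∑ t : ZMod 2 × ZMod n × ZMod n, E t = 1) :
    ∀ b : ZMod 2 × ZMod n × ZMod n,
      (Module.finrank k (hopfEigenspace g ω b) : k) =
        lam ((LinearMap.mul' k H ∘ₗ
          TensorProduct.map
            ((HopfAlgebra.antipode (R := k) (A := H) : Module.End k H) ∘ₗ
              E (-b + ((0 : ZMod 2), ((-x : ℤ) : ZMod n), ((x : ℤ) : ZMod n))))
            (E b) ∘ₗ
          (TensorProduct.comm k H H).toLinearMap) (Coalgebra.comul (R := k) Λ)) := by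
  intro b
  have hS : Function.Bijective (antipode k (A := H)) :=
    (Module.End.isUnit_iff _).1 (IsUnit.of_pow_eq_one hidx.2.1 (by have := hidx.1; omega))
  obtain ⟨hgl, l, hl0, hl, hlg⟩ := hg
  have hlamg : ∀ f : Module.Dual k H, conv f lam = f g • lam := by
    have e := hlam.eq_smul hΛ hS hpair hl
    have hc : l Λ ≠ 0 := fun h => hl0 (by rw [e, h, zero_smul])
    have e' : lam = (l Λ)⁻¹ • l := ((inv_smul_eq_iff₀ hc).2 e).symm
    intro f
    have hsm : conv f ((l Λ)⁻¹ • l) = (l Λ)⁻¹ • conv f l := by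
      simp only [conv, TensorProduct.map_smul_right, LinearMap.smul_comp, LinearMap.comp_smul]
    rw [e', hsm, hlg, smul_comm]
  have hΛ0 : Λ ≠ 0 := by rintro rfl; simp at hpair
  have hΛg : Λ * g = α g • Λ := by
    obtain ⟨L, hL0, hL, hLα⟩ := hα
    have e := hΛ.smul_eq hlam hS hL
    rw [hΛ.apply_antipode hΛ0 hlam hS, hpair, one_smul] at e
    have hc : lam L ≠ 0 := fun h => hL0 (by rw [← e, h, zero_smul])
    have h := hLα g
    rw [← e, smul_mul_assoc, smul_comm] at h
    exact smul_right_injective H hc h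
  have hΛS := hΛ.antipode_sq_eq hlam hS hpair hgl hlamg hΛg
  have hidem : ∀ t, E t * E t = E t := fun t => LinearMap.ext fun u => hEid t _ (hEmem t u)
  have hES := apply_comp_of_eigenvector_family hidem hEorth hEsum
    (T := (antipode k : Module.End k H) ^ 2)
    (c := fun t => (-1 : k) ^ t.1.val * ω ^ t.2.1.val)
    (fun t u => Module.End.mem_eigenspace_iff.1 (hEmem t u).1)
  have hEg := apply_comp_of_eigenvector_family hidem hEorth hEsum
    (T := LinearMap.mulRight k g) (c := fun t => ω ^ t.2.2.val)
    (fun t u => Module.End.mem_eigenspace_iff.1 (hEmem t u).2)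
  have hcS : α g • TensorProduct.map ((antipode k : Module.End k H) ^ 2)
      ((antipode k : Module.End k H) ^ 2) (comul Λ) = comul (R := k) Λ := by
    rw [← comul_antipode_sq, ← map_smul, hΛS]
  have hcg : TensorProduct.map (LinearMap.mulRight k g) (LinearMap.mulRight k g)
      (comul (R := k) Λ) = α g • comul Λ := by
    rw [← map_smul, ← hΛg, Bialgebra.comul_mul, hgl.2, ← (ℛ k Λ).eq]
    simp [Finset.sum_mul]
  have hvanish : ∀ t, t ≠ -b + ((0 : ZMod 2), ((-x : ℤ) : ZMod n), ((x : ℤ) : ZMod n)) →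
      TensorProduct.map (E b) (E t) (comul (R := k) Λ) = 0 := by
    intro t ht
    by_contra hne
    refine ht (eq_neg_add_of_weights hn hω (smul_left_injective k hne ?_)
      (smul_left_injective k hne ?_))
    · have h := congrArg (TensorProduct.map (E b) (E t)) hcS
      rw [map_smul, ← LinearMap.comp_apply, ← TensorProduct.map_comp, hES, hES, hx,
        TensorProduct.map_smul_left, TensorProduct.map_smul_right] at h
      simpa only [LinearMap.smul_apply, smul_smul, one_smul, mul_assoc] using h
    · have h := congrArg (TensorProduct.map (E b) (E t)) hcg
      rw [map_smul, ← LinearMap.comp_apply, ← TensorProduct.map_comp, hEg, hEg, hx,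
        TensorProduct.map_smul_left, TensorProduct.map_smul_right] at h
      simpa only [LinearMap.smul_apply, smul_smul] using h
  have hproj : LinearMap.IsProj (hopfEigenspace g ω b) (E b) := ⟨hEmem b, hEid b⟩
  rw [← hproj.trace, hΛ.trace_eq hlam hS hpair (E b) (ℛ k Λ)]
  have hterm : ∀ t, lam (LinearMap.mul' k H (TensorProduct.map (antipode k ∘ₗ E t) (E b)
      (TensorProduct.comm k H H (comul Λ)))) = (lam ∘ₗ LinearMap.mul' k H ∘ₗ
        LinearMap.rTensor H (antipode k) ∘ₗ (TensorProduct.comm k H H).toLinearMap)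
        (TensorProduct.map (E b) (E t) (comul Λ)) := by
    intro t
    rw [← (ℛ k Λ).eq]
    simp
  simp only [LinearMap.comp_apply, LinearEquiv.coe_coe]
  rw [hterm, ← Finset.sum_eq_single (s := Finset.univ) (f := fun t => (lam ∘ₗ LinearMap.mul' k H ∘ₗ
        LinearMap.rTensor H (antipode k) ∘ₗ (TensorProduct.comm k H H).toLinearMap)
        (TensorProduct.map (E b) (E t) (comul Λ))) _
      (fun t _ ht => by rw [hvanish t ht, map_zero]) (by simp)]
  have hsumE : ∑ t, TensorProduct.map (E b) (E t) (comul (R := k) Λ) =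
      LinearMap.rTensor H (E b) (comul Λ) := by
    rw [← (ℛ k Λ).eq]
    simp only [map_sum, TensorProduct.map_tmul, LinearMap.rTensor_tmul]
    rw [Finset.sum_comm]
    simp only [← TensorProduct.tmul_sum, ← LinearMap.sum_apply, hEsum, Module.End.one_apply]
  rw [← map_sum (lam ∘ₗ _), hsumE]
  conv_rhs => rw [← (ℛ k Λ).eq]
  simp
end
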